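/- Fix positive integers b, d, and k, set D = 2^{k/d}, and assume D ≥ 2^b. Fix any choice of the subspaces 𝕍_1,…,𝕍_k defining 𝕐_k. Then there is a constant C = C(b,d) such that for every semi-algebraic set S ⊆ ℝ^d of complexity at most b and every σ ∈ {−1,1}^k, the set I_{S,σ} = {y ∈ 𝕐_k : S ∩ {u ∈ ℝ^d : σ_1 P_1(u) > 0,…, σ_k P_k(u) > 0} ≠ ∅} (where (P_1,…,P_k) is the tuple associated to y) is a semi-algebraic subset of 𝕐_k that can be expressed as a Boolean combination of at most e^{D^C} polynomials, each of degree at most D^{C·d}. -/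

import Mathlib

open MvPolynomial

/-- A set `S ⊆ ℝ^d` is semi-algebraic of complexity at most `b`. -/
def IsSemiAlgebraicOfComplexity (d b : ℕ) (S : Set (Fin d → ℝ)) : Prop :=
  ∃ (P : Fin b → MvPolynomial (Fin d) ℝ) (τ : Fin b → Bool) (φ : (Fin b → Prop) → Prop),
    (∀ i, (P i).totalDegree ≤ b) ∧
    S = {x | φ fun i => if τ i then eval x (P i) < 0 else eval x (P i) = 0}

/-- The set `T ⊆ ℝ^M` is defined by a Boolean combination of (at most) `L` polynomials, each of
degree at most `t`. -/
def DefinedByPolys {M : ℕ} (T : Set (Fin M → ℝ)) (L : ℕ) (t : ℝ) : Prop :=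
  ∃ (Q : Fin L → MvPolynomial (Fin M) ℝ) (τ : Fin L → Bool) (φ : (Fin L → Prop) → Prop),
    (∀ i, ((Q i).totalDegree : ℝ) ≤ t) ∧
    T = {x | φ fun i => if τ i then eval x (Q i) < 0 else eval x (Q i) = 0}

namespace ISs


lemma coeff_comp_negX (p : Polynomial ℝ) (i : ℕ) :
    (p.comp (-Polynomial.X)).coeff i = (-1) ^ i * p.coeff i := by
  have : (-Polynomial.X : Polynomial ℝ) = Polynomial.C (-1) * Polynomial.X := by simp
  rw [this, Polynomial.comp_C_mul_X_coeff, mul_comm]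

lemma eraseLead_comp_negX (p : Polynomial ℝ) :
    (p.comp (-Polynomial.X)).eraseLead = p.eraseLead.comp (-Polynomial.X) := by
  ext i
  have hn : (p.comp (-Polynomial.X)).natDegree = p.natDegree := by
    simp [Polynomial.natDegree_comp]
  rw [coeff_comp_negX, Polynomial.eraseLead_coeff, Polynomial.eraseLead_coeff, hn, coeff_comp_negX]
  split_ifs <;> simp

lemma signVar_add_le (j : ℕ) : ∀ (n : ℕ) (p : Polynomial ℝ), p.natDegree ≤ n → p ≠ 0 →
    Polynomial.X ^ j ∣ p →
    p.signVariations + (p.comp (-Polynomial.X)).signVariations + j ≤ p.natDegree := by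
  intro n
  induction n using Nat.strong_induction_on with
  | _ n ih =>
  intro p hpn hp hj
  have hpc : p.comp (-Polynomial.X) ≠ 0 := by
    rwa [Ne, Polynomial.comp_neg_X_eq_zero_iff]
  have hjn : j ≤ p.natDegree := by
    have := Polynomial.natDegree_le_of_dvd hj hp
    simpa using this
  rw [Polynomial.signVariations_eq_eraseLead_add_ite hp,
    Polynomial.signVariations_eq_eraseLead_add_ite hpc, eraseLead_comp_negX]
  have hl : p.leadingCoeff ≠ 0 := by simpa using hp
  by_cases he : p.eraseLead = 0
  · have h2 : ∀ s : ℝ, s ≠ 0 → SignType.sign s ≠ 0 := by intro s hs; simpa using hs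
    have h3 := h2 _ hl
    have h4 := h2 ((-1) ^ p.natDegree * p.leadingCoeff) (by simp [hl, hp])
    rw [Polynomial.comp_neg_X_leadingCoeff_eq]
    simp only [he, Polynomial.zero_comp, Polynomial.signVariations_zero, Polynomial.leadingCoeff_zero,
      sign_zero, neg_zero, h3, h4, if_false]
    omega
  · have hlt : p.eraseLead.natDegree < p.natDegree := by
      rcases p.eraseLead_natDegree_lt_or_eraseLead_eq_zero with h | h
      · exact h
      · exact absurd h he
    have hj' : Polynomial.X ^ j ∣ p.eraseLead := by
      rw [Polynomial.X_pow_dvd_iff] at hj ⊢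
      intro d hd
      rw [Polynomial.eraseLead_coeff]
      split_ifs
      · rfl
      · exact hj d hd
    have ih' := ih p.eraseLead.natDegree (by omega) p.eraseLead le_rfl he hj'
    rw [Polynomial.comp_neg_X_leadingCoeff_eq, Polynomial.comp_neg_X_leadingCoeff_eq]
    have hl' : p.eraseLead.leadingCoeff ≠ 0 := by simpa using he
    generalize p.leadingCoeff = a at *
    generalize p.eraseLead.leadingCoeff = c at *
    by_cases h1 : p.natDegree = p.eraseLead.natDegree + 1
    · have : ¬ (SignType.sign a = -SignType.sign c ∧
        SignType.sign ((-1) ^ p.natDegree * a) =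
          -SignType.sign ((-1) ^ p.eraseLead.natDegree * c)) := by
        rw [h1, pow_succ]
        rintro ⟨e1, e2⟩
        have e3 : SignType.sign ((-1 : ℝ) ^ p.eraseLead.natDegree) ≠ 0 := by simp
        simp only [sign_mul] at e2
        rw [e1] at e2
        have e4 : SignType.sign c ≠ 0 := by simpa using hl'
        revert e2 e3 e4
        simp only [Left.sign_neg, sign_one]
        generalize SignType.sign c = s1
        generalize SignType.sign ((-1 : ℝ) ^ p.eraseLead.natDegree) = s2
        revert s1 s2
        decide
      split_ifs with h2 h3 <;> first | omega | exact absurd ⟨h2, h3⟩ this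
    · split_ifs <;> omega

lemma signVar_congr (p q : Polynomial ℝ)
    (h : ∀ i, SignType.sign (p.coeff i) = SignType.sign (q.coeff i)) :
    p.signVariations = q.signVariations := by
  have hz : ∀ i, p.coeff i = 0 ↔ q.coeff i = 0 := by
    intro i; rw [← sign_eq_zero_iff, h, sign_eq_zero_iff]
  have hs : p.support = q.support := by
    ext i; simp [hz]
  have hd : p.degree = q.degree := by simp [Polynomial.degree, hs]
  unfold Polynomial.signVariations
  have : p.coeffList.map SignType.sign = q.coeffList.map SignType.sign := by
    unfold Polynomial.coeffList
    rw [hd]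
    simp [h]
  rw [this]

lemma countP_neg_comp (p : Polynomial ℝ) :
    (p.comp (-Polynomial.X)).roots.countP (0 < ·) = p.roots.countP (· < 0) := by
  rw [Polynomial.roots_comp_neg_X, Multiset.countP_map, Multiset.countP_eq_card_filter]
  simp

lemma countP_three (s : Multiset ℝ) :
    s.card = s.countP (0 < ·) + s.countP (· < 0) + s.count 0 := by
  induction s using Multiset.induction_on with
  | empty => simp
  | cons a s ih =>
    simp only [Multiset.card_cons, Multiset.countP_cons, Multiset.count_cons]
    rcases lt_trichotomy a 0 with h | h | h
    · simp [h, h.not_gt, h.ne']; omega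
    · simp [h]; omega
    · simp [h, h.not_gt, h.ne]; omega

lemma descartes_eq (p : Polynomial ℝ) (hp : p ≠ 0) (hs : p.Splits) :
    p.roots.countP (0 < ·) = p.signVariations ∧
    p.roots.countP (· < 0) = (p.comp (-Polynomial.X)).signVariations := by
  have h1 := Polynomial.roots_countP_pos_le_signVariations (P := p)
  have h2 := Polynomial.roots_countP_pos_le_signVariations (P := p.comp (-Polynomial.X))
  rw [countP_neg_comp] at h2
  have h3 := signVar_add_le (p.roots.count 0) _ p le_rfl hp (by
    rw [Polynomial.count_roots]
    simpa using Polynomial.pow_rootMultiplicity_dvd p 0)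
  have h4 := countP_three p.roots
  have h5 : p.roots.card = p.natDegree := hs.natDegree_eq_card_roots.symm
  omega

lemma descartes_congr (p q : Polynomial ℝ) (hp : p ≠ 0) (hs : p.Splits) (hq : q ≠ 0)
    (hqs : q.Splits) (h : ∀ i, SignType.sign (p.coeff i) = SignType.sign (q.coeff i)) :
    p.roots.countP (0 < ·) = q.roots.countP (0 < ·) ∧
    p.roots.countP (· < 0) = q.roots.countP (· < 0) := by
  obtain ⟨a1, a2⟩ := descartes_eq p hp hs
  obtain ⟨b1, b2⟩ := descartes_eq q hq hqs
  rw [a1, a2, b1, b2]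
  refine ⟨signVar_congr _ _ h, signVar_congr _ _ ?_⟩
  intro i
  simp only [coeff_comp_negX, sign_mul, h]


open Matrix in
lemma inertia_le {m : ℕ} (A : Matrix (Fin m) (Fin m) ℝ) (hA : A.IsHermitian) (ε : ℝ)
    {J : Type} [Fintype J] (L : (Fin m → ℝ) →ₗ[ℝ] (J → ℝ))
    (h : ∀ v, L v = 0 → ε * (v ⬝ᵥ (A *ᵥ v)) ≤ 0) :
    Fintype.card {i // 0 < ε * hA.eigenvalues i} ≤ Fintype.card J := by
  by_contra hlt
  push Not at hlt
  set U : Matrix (Fin m) (Fin m) ℝ := (hA.eigenvectorUnitary : Matrix (Fin m) (Fin m) ℝ) with hU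
  have hUU : star U * U = 1 := by
    rw [hU]; exact Unitary.coe_star_mul_self hA.eigenvectorUnitary
  let E : ({i // 0 < ε * hA.eigenvalues i} → ℝ) →ₗ[ℝ] (Fin m → ℝ) :=
    { toFun := fun c i => if h : 0 < ε * hA.eigenvalues i then c ⟨i, h⟩ else 0
      map_add' := by intro x y; ext i; by_cases h : 0 < ε * hA.eigenvalues i <;> simp [h]
      map_smul' := by intro x y; ext i; by_cases h : 0 < ε * hA.eigenvalues i <;> simp [h] }
  have hker := LinearMap.ker_ne_bot_of_finrank_lt (f := L ∘ₗ U.mulVecLin ∘ₗ E) (by simpa using hlt)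
  obtain ⟨c, hc, hc0⟩ := (Submodule.ne_bot_iff _).mp hker
  have hv := h (U *ᵥ E c) (by simpa using hc)
  have hA' : star U * A * U = diagonal hA.eigenvalues := by
    have := hA.conjStarAlgAut_star_eigenvectorUnitary
    rw [Unitary.conjStarAlgAut_star_apply] at this
    rw [hU]
    exact this
  have key : (U *ᵥ E c) ⬝ᵥ (A *ᵥ (U *ᵥ E c)) = ∑ i, hA.eigenvalues i * (E c i) ^ 2 := by
    have h1 : (U *ᵥ E c) ⬝ᵥ (A *ᵥ (U *ᵥ E c)) = E c ⬝ᵥ ((star U * A * U) *ᵥ E c) := by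
      have : star U = Uᵀ := by
        rw [star_eq_conjTranspose, conjTranspose_eq_transpose_of_trivial]
      rw [this, ← mulVec_mulVec, ← mulVec_mulVec, dotProduct_mulVec (E c) Uᵀ, vecMul_transpose]
    rw [h1, hA']
    simp only [dotProduct, mulVec_diagonal]
    exact Finset.sum_congr rfl fun i _ => by ring
  rw [key, Finset.mul_sum] at hv
  obtain ⟨i, hi⟩ : ∃ i, c i ≠ 0 := by
    by_contra hcon
    push Not at hcon
    exact hc0 (funext hcon)
  have hnn : ∀ i, 0 ≤ ε * (hA.eigenvalues i * (E c i) ^ 2) := by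
    intro i
    by_cases h : 0 < ε * hA.eigenvalues i
    · rw [← mul_assoc]; positivity
    · have : E c i = 0 := by simp [E, h]
      simp [this]
  have hpos : 0 < ε * (hA.eigenvalues i * (E c i) ^ 2) := by
    have : E c i = c i := by simp [E, i.2]
    rw [this, ← mul_assoc]
    have := i.2
    positivity
  have := Finset.sum_pos' (fun i _ => hnn i) ⟨i.1, Finset.mem_univ _, hpos⟩
  linarith

open Matrix in
lemma rank_lower {m : ℕ} (A : Matrix (Fin m) (Fin m) ℝ) (hA : A.IsHermitian)
    (Z : Finset ℂ) (w : ℂ → ℂ) (hZ : Z.card ≤ m)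
    (hAw : ∀ i j, ((A i j : ℝ) : ℂ) = ∑ z ∈ Z, w z * z ^ ((i : ℕ) + (j : ℕ))) :
    (Z.filter (fun z => w z ≠ 0)).card ≤ Fintype.card {i // hA.eigenvalues i ≠ 0} := by
  classical
  let AC : Matrix (Fin m) (Fin m) ℂ := A.map (algebraMap ℝ ℂ)
  let R : Matrix (Fin m) Z ℂ := fun i z => (Lagrange.basis Z id (z : ℂ)).coeff i
  have hR : ∀ (z' z : Z), ∑ i : Fin m, (z' : ℂ) ^ (i : ℕ) * R i z = if z' = z then 1 else 0 := by
    intro z' z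
    have hdeg : (Lagrange.basis Z id (z : ℂ)).natDegree < m := by
      have h0 : 0 < Z.card := Finset.card_pos.mpr ⟨z, z.2⟩
      have := Lagrange.degree_basis (v := (id : ℂ → ℂ)) (s := Z) (i := (z : ℂ))
        Function.injective_id.injOn z.2
      have h2 := Polynomial.natDegree_eq_of_degree_eq_some this
      omega
    have h1 : (Lagrange.basis Z id (z : ℂ)).eval (z' : ℂ) =
        ∑ i : Fin m, (z' : ℂ) ^ (i : ℕ) * R i z := by
      rw [Polynomial.eval_eq_sum_range' hdeg, Finset.sum_range]
      exact Finset.sum_congr rfl fun i _ => mul_comm _ _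
    rw [← h1]
    by_cases hzz : z' = z
    · subst hzz
      simpa using Lagrange.eval_basis_self (v := (id : ℂ → ℂ)) (s := Z) (i := (z' : ℂ))
        Function.injective_id.injOn z'.2
    · have : (z : ℂ) ≠ (z' : ℂ) := fun h => hzz (Subtype.ext h.symm)
      simpa [hzz] using Lagrange.eval_basis_of_ne (v := (id : ℂ → ℂ)) (s := Z) this z'.2
  have hdiag : Rᵀ * AC * R = diagonal (fun z : Z => w z) := by
    have hAC : AC = (of fun (i : Fin m) (z : Z) => (z : ℂ) ^ (i : ℕ)) *
        diagonal (fun z : Z => w z) * (of fun (z : Z) (i : Fin m) => (z : ℂ) ^ (i : ℕ)) := by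
      ext i j
      have := hAw i j
      simp only [AC, map_apply, Complex.coe_algebraMap, this]
      rw [mul_apply]
      simp only [mul_diagonal, of_apply]
      rw [← Finset.sum_coe_sort Z]
      refine Finset.sum_congr rfl fun z _ => by rw [pow_add]; ring
    have hVR : (of fun (z : Z) (i : Fin m) => (z : ℂ) ^ (i : ℕ)) * R = 1 := by
      ext z z'
      rw [mul_apply]
      simp only [of_apply, hR, one_apply]
    have hVR' : Rᵀ * (of fun (i : Fin m) (z : Z) => (z : ℂ) ^ (i : ℕ)) = 1 := by
      have := congrArg transpose hVR
      rw [transpose_mul, transpose_one] at this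
      exact this
    rw [hAC]
    calc Rᵀ * ((of fun (i : Fin m) (z : Z) => (z : ℂ) ^ (i : ℕ)) *
        diagonal (fun z : Z => w z) * (of fun (z : Z) (i : Fin m) => (z : ℂ) ^ (i : ℕ))) * R
        = (Rᵀ * (of fun (i : Fin m) (z : Z) => (z : ℂ) ^ (i : ℕ))) *
        diagonal (fun z : Z => w z) * ((of fun (z : Z) (i : Fin m) => (z : ℂ) ^ (i : ℕ)) * R) := by
          simp only [Matrix.mul_assoc]
      _ = _ := by rw [hVR, hVR', Matrix.one_mul, Matrix.mul_one]
  have h1 : (diagonal (fun z : Z => w z)).rank ≤ AC.rank := by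
    rw [← hdiag]
    exact (rank_mul_le_left _ _).trans (rank_mul_le_right _ _)
  have h2 : AC.rank ≤ Fintype.card {i // hA.eigenvalues i ≠ 0} := by
    have hsp := hA.spectral_theorem
    rw [Unitary.conjStarAlgAut_apply] at hsp
    have : AC = ((hA.eigenvectorUnitary : Matrix (Fin m) (Fin m) ℝ).map (algebraMap ℝ ℂ)) *
        (diagonal (fun i => ((hA.eigenvalues i : ℝ) : ℂ))) *
        ((star (hA.eigenvectorUnitary : Matrix (Fin m) (Fin m) ℝ)).map (algebraMap ℝ ℂ)) := by
      have h3 := congrArg (fun B : Matrix (Fin m) (Fin m) ℝ => B.map (algebraMap ℝ ℂ)) hsp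
      simp only [Matrix.map_mul] at h3
      rw [diagonal_map (map_zero _)] at h3
      exact h3
    rw [this]
    refine ((rank_mul_le_left _ _).trans (rank_mul_le_right _ _)).trans ?_
    rw [rank_diagonal]
    simp
  rw [rank_diagonal] at h1
  have h4 : (Z.filter (fun z => w z ≠ 0)).card = Fintype.card {z : Z // w z ≠ 0} := by
    rw [Fintype.card_subtype, ← Finset.card_map (Function.Embedding.subtype _)]
    congr 1
    ext z
    simp [and_comm]
  omega

open Matrix in
lemma quad_form {m : ℕ} (A : Matrix (Fin m) (Fin m) ℝ)
    (Z : Finset ℂ) (w : ℂ → ℂ)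
    (hAw : ∀ i j, ((A i j : ℝ) : ℂ) = ∑ z ∈ Z, w z * z ^ ((i : ℕ) + (j : ℕ))) (v : Fin m → ℝ) :
    v ⬝ᵥ (A *ᵥ v) = ∑ z ∈ Z, (w z * (∑ i, (v i : ℂ) * z ^ (i : ℕ)) ^ 2).re := by
  have : ((v ⬝ᵥ (A *ᵥ v) : ℝ) : ℂ) = ∑ z ∈ Z, (w z * (∑ i, (v i : ℂ) * z ^ (i : ℕ)) ^ 2) := by
    simp only [dotProduct, mulVec, Complex.ofReal_sum, Complex.ofReal_mul, hAw]
    simp only [Finset.mul_sum, Finset.sum_mul, sq]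
    calc _ = ∑ i : Fin m, ∑ z ∈ Z, ∑ j : Fin m, (v i : ℂ) * (w z * z ^ ((i : ℕ) + (j : ℕ)) * (v j : ℂ)) :=
          Finset.sum_congr rfl fun i _ => Finset.sum_comm
      _ = ∑ z ∈ Z, ∑ i : Fin m, ∑ j : Fin m, (v i : ℂ) * (w z * z ^ ((i : ℕ) + (j : ℕ)) * (v j : ℂ)) :=
          Finset.sum_comm
      _ = _ := by
        refine Finset.sum_congr rfl fun z _ => ?_
        rw [Finset.sum_comm]
        refine Finset.sum_congr rfl fun i _ => Finset.sum_congr rfl fun j _ => ?_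
        rw [pow_add]; ring
  rw [← Complex.re_sum, ← this, Complex.ofReal_re]

open Matrix ComplexConjugate in
lemma pos_le {m : ℕ} (A : Matrix (Fin m) (Fin m) ℝ) (hA : A.IsHermitian) (ε : ℝ)
    (Z : Finset ℂ) (w : ℂ → ℂ) (hZc : ∀ z ∈ Z, conj z ∈ Z) (hwc : ∀ z, w (conj z) = conj (w z))
    (hAw : ∀ i j, ((A i j : ℝ) : ℂ) = ∑ z ∈ Z, w z * z ^ ((i : ℕ) + (j : ℕ))) :
    Fintype.card {i // 0 < ε * hA.eigenvalues i} ≤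
      (Z.filter (fun z => (z.im = 0 ∧ 0 < ε * (w z).re) ∨ (0 < z.im ∧ w z ≠ 0))).card := by
  have hsq : ∀ z, ∃ s : ℂ, s ^ 2 = ε * w z := fun z => IsAlgClosed.exists_pow_nat_eq _ (by norm_num)
  choose s hs using hsq
  set J := Z.filter (fun z => (z.im = 0 ∧ 0 < ε * (w z).re) ∨ (0 < z.im ∧ w z ≠ 0)) with hJ
  let ev : (Fin m → ℝ) → ℂ → ℂ := fun v z => ∑ i, (v i : ℂ) * z ^ (i : ℕ)
  let L : (Fin m → ℝ) →ₗ[ℝ] (J → ℝ) :=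
    { toFun := fun v z => if (z : ℂ).im = 0 then (ev v z).re else (s z * ev v z).re
      map_add' := by
        intro x y; ext z
        simp only [ev, Pi.add_apply, Complex.ofReal_add, add_mul, Finset.sum_add_distrib, mul_add,
          Complex.add_re]
        split_ifs <;> rfl
      map_smul' := by
        intro c y; ext z
        have : ev (c • y) z = c * ev y z := by
          simp only [ev, Pi.smul_apply, smul_eq_mul, Complex.ofReal_mul, Finset.mul_sum, mul_assoc]
        have h2 : s z * (c * ev y z) = c * (s z * ev y z) := by ring
        simp only [this, h2, Complex.re_ofReal_mul, Pi.smul_apply, smul_eq_mul, RingHom.id_apply]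
        split_ifs <;> rfl }
  have := inertia_le A hA ε L ?_
  · simpa using this
  intro v hv
  rw [quad_form A Z w hAw v, Finset.mul_sum]
  have hup : ∀ z ∈ Z, 0 < z.im → ε * (w z * (ev v z) ^ 2).re ≤ 0 := by
    intro z hz him
    by_cases hw : w z = 0
    · simp [hw]
    have hzJ : z ∈ J := by simp [hJ, hz, him, hw]
    have h1 : (s z * ev v z).re = 0 := by
      have := congrFun hv ⟨z, hzJ⟩
      simpa [L, him.ne'] using this
    have h2 : ε * (w z * (ev v z) ^ 2).re = ((s z * ev v z) ^ 2).re := by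
      rw [mul_pow, hs, mul_assoc, Complex.re_ofReal_mul]
    rw [h2, sq, Complex.mul_re, h1]
    nlinarith [sq_nonneg (s z * ev v z).im]
  have hevc : ∀ z, ev v (conj z) = conj (ev v z) := by
    intro z; simp [ev]
  refine Finset.sum_nonpos fun z hz => ?_
  change ε * (w z * (ev v z) ^ 2).re ≤ 0
  rcases lt_trichotomy z.im 0 with h | h | h
  · have := hup (conj z) (hZc z hz) (by simpa using h)
    rw [hevc, hwc, ← map_pow, ← map_mul, Complex.conj_re] at this
    exact this
  · have hzc : conj z = z := Complex.conj_eq_iff_im.mpr h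
    have hw0 : (w z).im = 0 := Complex.conj_eq_iff_im.mp (by rw [← hwc, hzc])
    have he0 : (ev v z).im = 0 := Complex.conj_eq_iff_im.mp (by rw [← hevc, hzc])
    have h3 : ε * (w z * (ev v z) ^ 2).re = (ε * (w z).re) * (ev v z).re ^ 2 := by
      rw [sq, Complex.mul_re, Complex.mul_re, Complex.mul_im, hw0, he0]; ring
    rw [h3]
    by_cases hp : 0 < ε * (w z).re
    · have hzJ : z ∈ J := by simp [hJ, hz, h, hp]
      have h1 : (ev v z).re = 0 := by
        have := congrFun hv ⟨z, hzJ⟩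
        simpa [L, h] using this
      simp [h1]
    · push Not at hp
      exact mul_nonpos_of_nonpos_of_nonneg hp (sq_nonneg _)
  · exact hup z hz h

open ComplexConjugate in
lemma signature_eq {m : ℕ} (A : Matrix (Fin m) (Fin m) ℝ) (hA : A.IsHermitian)
    (Z : Finset ℂ) (w : ℂ → ℂ) (hZ : Z.card ≤ m)
    (hZc : ∀ z ∈ Z, conj z ∈ Z) (hwc : ∀ z, w (conj z) = conj (w z))
    (hAw : ∀ i j, ((A i j : ℝ) : ℂ) = ∑ z ∈ Z, w z * z ^ ((i : ℕ) + (j : ℕ))) :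
    ((A.charpoly.roots.countP (0 < ·) : ℕ) : ℤ) - (A.charpoly.roots.countP (· < 0) : ℕ) =
      ∑ z ∈ Z.filter (fun z => z.im = 0), (SignType.sign (w z).re : ℤ) := by
  have hpos := pos_le A hA 1 Z w hZc hwc hAw
  have hneg := pos_le A hA (-1) Z w hZc hwc hAw
  have hrk := rank_lower A hA Z w hZ hAw
  have c1 : A.charpoly.roots.countP (0 < ·) = Fintype.card {i // 0 < 1 * hA.eigenvalues i} := by
    rw [hA.roots_charpoly_eq_eigenvalues, Multiset.countP_map, Fintype.card_subtype]
    simp [Finset.card, Finset.filter]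
  have c2 : A.charpoly.roots.countP (· < 0) = Fintype.card {i // 0 < (-1) * hA.eigenvalues i} := by
    rw [hA.roots_charpoly_eq_eigenvalues, Multiset.countP_map, Fintype.card_subtype]
    simp [Finset.card, Finset.filter]
  have c3 : Fintype.card {i // hA.eigenvalues i ≠ 0} =
      Fintype.card {i // 0 < 1 * hA.eigenvalues i} +
      Fintype.card {i // 0 < (-1) * hA.eigenvalues i} := by
    simp only [Fintype.card_subtype]
    rw [← Finset.card_union_of_disjoint]
    · congr 1
      ext i
      simp only [Finset.mem_filter, Finset.mem_univ, true_and, Finset.mem_union, one_mul,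
        neg_mul, Left.neg_pos_iff]
      rw [ne_iff_lt_or_gt, or_comm]
    · rw [Finset.disjoint_filter]
      intro i _ h1 h2
      linarith
  set P := Z.filter (fun z => z.im = 0 ∧ 0 < (w z).re) with hP
  set N := Z.filter (fun z => z.im = 0 ∧ (w z).re < 0) with hN
  set U := Z.filter (fun z => 0 < z.im ∧ w z ≠ 0) with hU
  set D := Z.filter (fun z => z.im < 0 ∧ w z ≠ 0) with hD
  have hUD : U.card = D.card := by
    refine Finset.card_bij (fun z _ => conj z) ?_ ?_ ?_
    · intro z hz
      simp only [hU, hD, Finset.mem_filter] at hz ⊢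
      refine ⟨hZc z hz.1, by simpa using hz.2.1, ?_⟩
      rw [hwc]; simpa using hz.2.2
    · intro z _ z' _ h
      exact (starRingEnd ℂ).injective h
    · intro z hz
      simp only [hU, hD, Finset.mem_filter] at hz ⊢
      refine ⟨conj z, ⟨hZc z hz.1, by simpa using hz.2.1, ?_⟩, by simp⟩
      rw [hwc]; simpa using hz.2.2
  have hre : ∀ z : ℂ, z.im = 0 → w z ≠ 0 → (w z).re ≠ 0 := by
    intro z hz hw h0
    have hzc : conj z = z := Complex.conj_eq_iff_im.mpr hz
    have hw0 : (w z).im = 0 := Complex.conj_eq_iff_im.mp (by rw [← hwc, hzc])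
    exact hw (Complex.ext h0 hw0)
  have e1 : (Z.filter (fun z => (z.im = 0 ∧ 0 < 1 * (w z).re) ∨ (0 < z.im ∧ w z ≠ 0))).card =
      P.card + U.card := by
    rw [← Finset.card_union_of_disjoint]
    · rw [hP, hU, ← Finset.filter_or]; simp only [one_mul]
    · rw [hP, hU, Finset.disjoint_filter]
      rintro z _ ⟨h1, _⟩ ⟨h2, _⟩
      linarith
  have e2 : (Z.filter (fun z => (z.im = 0 ∧ 0 < (-1) * (w z).re) ∨ (0 < z.im ∧ w z ≠ 0))).card =
      N.card + U.card := by
    rw [← Finset.card_union_of_disjoint]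
    · rw [hN, hU, ← Finset.filter_or]; simp only [neg_mul, one_mul, Left.neg_pos_iff]
    · rw [hN, hU, Finset.disjoint_filter]
      rintro z _ ⟨h1, _⟩ ⟨h2, _⟩
      linarith
  have e3 : P.card + N.card + U.card + D.card ≤ (Z.filter (fun z => w z ≠ 0)).card := by
    rw [← Finset.card_union_of_disjoint, ← Finset.card_union_of_disjoint,
      ← Finset.card_union_of_disjoint]
    · apply Finset.card_le_card
      intro z
      simp only [hP, hN, hU, hD, Finset.mem_union, Finset.mem_filter]
      rintro (((⟨h1, _, h2⟩ | ⟨h1, _, h2⟩) | ⟨h1, _, h2⟩) | ⟨h1, _, h2⟩)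
      · exact ⟨h1, fun h => by simp [h] at h2⟩
      · exact ⟨h1, fun h => by simp [h] at h2⟩
      · exact ⟨h1, h2⟩
      · exact ⟨h1, h2⟩
    · rw [Finset.disjoint_left]
      intro z
      simp only [hP, hN, hU, hD, Finset.mem_union, Finset.mem_filter]
      rintro ((⟨h1, h3, h2⟩ | ⟨h1, h3, h2⟩) | ⟨h1, h3, h2⟩) ⟨_, h4, _⟩ <;> linarith
    · rw [Finset.disjoint_left]
      intro z
      simp only [hP, hN, hU, Finset.mem_union, Finset.mem_filter]
      rintro (⟨h1, h3, h2⟩ | ⟨h1, h3, h2⟩) ⟨_, h4, _⟩ <;> linarith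
    · rw [Finset.disjoint_left]
      intro z
      simp only [hP, hN, Finset.mem_filter]
      rintro ⟨h1, h3, h2⟩ ⟨_, h4, _⟩; linarith
  have e4 : ∑ z ∈ Z.filter (fun z => z.im = 0), (SignType.sign (w z).re : ℤ) =
      (P.card : ℤ) - N.card := by
    have : ∀ z ∈ Z.filter (fun z => z.im = 0), (SignType.sign (w z).re : ℤ) =
      (if 0 < (w z).re then 1 else 0) - (if (w z).re < 0 then 1 else 0) := by
      intro z _
      rcases lt_trichotomy (w z).re 0 with h | h | h
      · simp [h, h.not_gt]
      · simp [h]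
      · simp [h, h.not_gt]
    rw [Finset.sum_congr rfl this, Finset.sum_sub_distrib, Finset.sum_boole, Finset.sum_boole,
      Finset.filter_filter, Finset.filter_filter]
  rw [e4, c1, c2]
  omega


lemma td_mul {σ : Type} {p q : MvPolynomial σ ℝ} {A B C : ℕ} (hp : p.totalDegree ≤ A)
    (hq : q.totalDegree ≤ B) (h : A + B ≤ C) : (p * q).totalDegree ≤ C :=
  (MvPolynomial.totalDegree_mul p q).trans (by omega)

lemma td_pow {σ : Type} {p : MvPolynomial σ ℝ} {A C : ℕ} (hp : p.totalDegree ≤ A) (n : ℕ)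
    (h : n * A ≤ C) : (p ^ n).totalDegree ≤ C :=
  (MvPolynomial.totalDegree_pow p n).trans ((Nat.mul_le_mul_left n hp).trans h)

lemma td_sum {σ ι : Type} {s : Finset ι} {f : ι → MvPolynomial σ ℝ} {C : ℕ}
    (h : ∀ i ∈ s, (f i).totalDegree ≤ C) : (∑ i ∈ s, f i).totalDegree ≤ C :=
  MvPolynomial.totalDegree_finsetSum_le h

lemma td_nat {σ : Type} (m : ℕ) : ((m : MvPolynomial σ ℝ)).totalDegree = 0 := by
  rw [← map_natCast (MvPolynomial.C (σ := σ) (R := ℝ)) m]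
  exact MvPolynomial.totalDegree_C _

lemma newton (s : Multiset ℂ) (k : ℕ) (hk : 0 < k) :
    (s.map (· ^ k)).sum = (-1) ^ (k + 1) * k * s.esymm k -
      ∑ a ∈ Finset.HasAntidiagonal.antidiagonal k with a.1 ∈ Set.Ioo 0 k,
        (-1) ^ a.1 * s.esymm a.1 * (s.map (· ^ a.2)).sum := by
  obtain ⟨n, f, rfl⟩ : ∃ (n : ℕ) (f : Fin n → ℂ), s = Finset.univ.val.map f := by
    induction s using Quot.inductionOn with
    | _ l =>
    refine ⟨l.length, l.get, ?_⟩
    simp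
  have h := congrArg (MvPolynomial.aeval f) (MvPolynomial.psum_eq_mul_esymm_sub_sum (Fin n) ℂ k hk)
  have hp : ∀ j, MvPolynomial.aeval f (MvPolynomial.psum (Fin n) ℂ j) =
      ((Finset.univ.val.map f).map (· ^ j)).sum := by
    intro j
    rw [Multiset.map_map]
    simp only [MvPolynomial.psum, map_sum, map_pow, MvPolynomial.aeval_X]
    rfl
  simp only [map_sub, map_mul, map_pow, map_neg, map_one, map_natCast, map_sum, hp,
    MvPolynomial.aeval_esymm_eq_multiset_esymm] at h
  exact h

/-- scaled specialization -/
noncomputable def scl {n : ℕ} (g : Polynomial (MvPolynomial (Fin n) ℝ)) (m : ℕ) (x : Fin n → ℝ) :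
    Polynomial ℝ := (g.map (eval x)).scaleRoots (eval x (g.coeff m))

lemma esymm_scl {n : ℕ} (g : Polynomial (MvPolynomial (Fin n) ℝ)) (m N : ℕ)
    (hg : ∀ i, (g.coeff i).totalDegree ≤ N) (j : ℕ) (hj : 0 < j) :
    ∃ E : MvPolynomial (Fin n) ℝ, E.totalDegree ≤ j * N ∧
      ∀ x, (g.map (eval x)).natDegree = m → g.map (eval x) ≠ 0 →
        ((eval x E : ℝ) : ℂ) = ((scl g m x).map (algebraMap ℝ ℂ)).roots.esymm j := by
  by_cases hjm : j ≤ m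
  · refine ⟨(-1) ^ j * (g.coeff (m - j) * (g.coeff m) ^ (j - 1)), ?_, ?_⟩
    · have h1 : ((-1 : MvPolynomial (Fin n) ℝ) ^ j).totalDegree ≤ 0 :=
        td_pow (A := 0) (by simp) _ (by simp)
      refine td_mul h1 (td_mul (hg _) (td_pow (hg _) (j - 1) le_rfl) le_rfl) ?_
      obtain ⟨i, rfl⟩ : ∃ i, j = i + 1 := ⟨j - 1, by omega⟩
      simp only [Nat.add_sub_cancel]
      nlinarith
    · intro x hx hx0
      have ha : eval x (g.coeff m) ≠ 0 := by
        have := Polynomial.leadingCoeff_ne_zero.mpr hx0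
        rwa [Polynomial.leadingCoeff, hx, Polynomial.coeff_map] at this
      have hnd : ((scl g m x).map (algebraMap ℝ ℂ)).natDegree = m := by
        rw [Polynomial.natDegree_map, scl, Polynomial.natDegree_scaleRoots, hx]
      have hv := Polynomial.coeff_eq_esymm_roots_of_splits
        (p := (scl g m x).map (algebraMap ℝ ℂ)) (IsAlgClosed.splits _) (k := m - j) (by omega)
      have hlc : ((scl g m x).map (algebraMap ℝ ℂ)).leadingCoeff = ((eval x (g.coeff m) : ℝ) : ℂ) := by
        rw [Polynomial.leadingCoeff_map, scl, Polynomial.leadingCoeff_scaleRoots,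
          Polynomial.leadingCoeff, hx, Polynomial.coeff_map]
        rfl
      have hmj : m - (m - j) = j := by omega
      rw [hnd, hlc, hmj, Polynomial.coeff_map, scl, Polynomial.coeff_scaleRoots, hx, hmj,
        Polynomial.coeff_map] at hv
      have haC : ((eval x (g.coeff m) : ℝ) : ℂ) ≠ 0 := by exact_mod_cast ha
      apply mul_left_cancel₀ haC
      obtain ⟨i, rfl⟩ : ∃ i, j = i + 1 := ⟨j - 1, by omega⟩
      simp only [Nat.add_sub_cancel, map_mul, map_pow, map_neg, map_one, Complex.ofReal_mul,
        Complex.ofReal_pow, Complex.ofReal_neg, Complex.ofReal_one, Complex.coe_algebraMap] at hv ⊢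
      have h1 : ((-1 : ℂ) ^ (i + 1)) * ((-1 : ℂ) ^ (i + 1)) = 1 := by
        rw [← mul_pow]; simp
      rw [scl]
      calc _ = (-1 : ℂ) ^ (i + 1) * (((eval x (g.coeff (m - (i + 1))) : ℝ) : ℂ) *
          ((eval x (g.coeff m) : ℝ) : ℂ) ^ (i + 1)) := by ring
        _ = _ := by rw [hv]; linear_combination (((eval x (g.coeff m) : ℝ) : ℂ) * Multiset.esymm (Polynomial.map (algebraMap ℝ ℂ)
          ((Polynomial.map (eval x) g).scaleRoots (eval x (g.coeff m)))).roots (i + 1)) * h1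
  · refine ⟨0, by simp, ?_⟩
    intro x hx hx0
    have hnd : ((scl g m x).map (algebraMap ℝ ℂ)).natDegree = m := by
      rw [Polynomial.natDegree_map, scl, Polynomial.natDegree_scaleRoots, hx]
    have hc := Polynomial.card_roots' ((scl g m x).map (algebraMap ℝ ℂ))
    rw [Multiset.esymm, Multiset.powersetCard_eq_empty _ (by omega)]
    simp

lemma psum_scl {n : ℕ} (g : Polynomial (MvPolynomial (Fin n) ℝ)) (m N : ℕ)
    (hg : ∀ i, (g.coeff i).totalDegree ≤ N) (k : ℕ) :
    ∃ P : MvPolynomial (Fin n) ℝ, P.totalDegree ≤ k * N ∧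
      ∀ x, (g.map (eval x)).natDegree = m → g.map (eval x) ≠ 0 →
        ((eval x P : ℝ) : ℂ) = (((scl g m x).map (algebraMap ℝ ℂ)).roots.map (· ^ k)).sum := by
  induction k using Nat.strong_induction_on with
  | _ k ih =>
  rcases Nat.eq_zero_or_pos k with rfl | hk
  · refine ⟨(m : MvPolynomial (Fin n) ℝ), by rw [td_nat]; simp, ?_⟩
    intro x hx hx0
    have hnd : ((scl g m x).map (algebraMap ℝ ℂ)).natDegree = m := by
      rw [Polynomial.natDegree_map, scl, Polynomial.natDegree_scaleRoots, hx]
    have hc : ((scl g m x).map (algebraMap ℝ ℂ)).natDegree = _ :=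
      (IsAlgClosed.splits ((scl g m x).map (algebraMap ℝ ℂ))).natDegree_eq_card_roots
    simp only [pow_zero, Multiset.map_const', Multiset.sum_replicate, ← hc, hnd]
    simp
  · choose! P hP1 hP2 using ih
    have hE := fun j => esymm_scl g m N hg j
    choose! E hE1 hE2 using hE
    refine ⟨(-1) ^ (k + 1) * (k : MvPolynomial (Fin n) ℝ) * E k -
      ∑ a ∈ Finset.HasAntidiagonal.antidiagonal k with a.1 ∈ Set.Ioo 0 k, (-1) ^ a.1 * E a.1 * P a.2, ?_, ?_⟩
    · have h1 : ∀ j, ((-1 : MvPolynomial (Fin n) ℝ) ^ j).totalDegree ≤ 0 := fun j =>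
        td_pow (A := 0) (by simp) _ (by simp)
      refine (MvPolynomial.totalDegree_sub _ _).trans (max_le ?_ (td_sum ?_))
      · refine td_mul (A := 0) (td_mul (h1 _) (B := 0) (td_nat k).le le_rfl) (hE1 k hk) (by simp)
      · intro a ha
        simp only [Finset.mem_filter, Finset.HasAntidiagonal.mem_antidiagonal, Set.mem_Ioo] at ha
        refine td_mul (td_mul (h1 _) (hE1 a.1 ha.2.1) le_rfl) (hP1 a.2 (by omega)) ?_
        rw [← ha.1]; apply le_of_eq; ring
    · intro x hx hx0
      rw [newton _ k hk]
      simp only [map_sub, map_mul, map_pow, map_neg, map_one, map_natCast, map_sum,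
        Complex.ofReal_sub, Complex.ofReal_mul, Complex.ofReal_sum,
        Complex.ofReal_pow, Complex.ofReal_neg, Complex.ofReal_one, Complex.ofReal_natCast]
      rw [hE2 k hk x hx hx0]
      congr 1
      refine Finset.sum_congr rfl fun a ha => ?_
      simp only [Finset.mem_filter, Finset.HasAntidiagonal.mem_antidiagonal, Set.mem_Ioo] at ha
      rw [hE2 a.1 ha.2.1 x hx hx0, hP2 a.2 (by omega) x hx hx0]

/-- weight -/
noncomputable def wt (h Q : Polynomial ℝ) (a : ℝ) (N : ℕ) (z : ℂ) : ℂ :=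
  ((h.map (algebraMap ℝ ℂ)).roots.count z : ℂ) *
    ((a : ℂ) ^ (2 * N) * (Q.map (algebraMap ℝ ℂ)).eval (z / a))

lemma hermite {n : ℕ} (g Q : Polynomial (MvPolynomial (Fin n) ℝ)) (m N : ℕ) (hm : m ≤ N)
    (hg : ∀ i, (g.coeff i).totalDegree ≤ N) (hQ : ∀ i, (Q.coeff i).totalDegree ≤ N)
    (hQd : Q.natDegree ≤ N) :
    ∃ H : Matrix (Fin m) (Fin m) (MvPolynomial (Fin n) ℝ),
      (∀ i j, (H i j).totalDegree ≤ 6 * N ^ 2) ∧ (∀ i j, H i j = H j i) ∧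
      ∀ x, (g.map (eval x)).natDegree = m → g.map (eval x) ≠ 0 →
        ∀ i j, ((eval x (H i j) : ℝ) : ℂ) =
          ∑ z ∈ ((scl g m x).map (algebraMap ℝ ℂ)).roots.toFinset,
            wt (scl g m x) (Q.map (eval x)) (eval x (g.coeff m)) N z * z ^ ((i : ℕ) + (j : ℕ)) := by
  have hP := fun k => psum_scl g m N hg k
  choose P hP1 hP2 using hP
  refine ⟨fun i j => ∑ k ∈ Finset.range (N + 1), Q.coeff k * (g.coeff m) ^ (2 * N - k) *
    P (k + i + j), ?_, ?_, ?_⟩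
  · intro i j
    refine td_sum fun k hk => ?_
    have hk' : k ≤ N := by simpa [Nat.lt_succ_iff] using hk
    refine td_mul (td_mul (hQ k) (td_pow (hg m) (2 * N - k) (C := 2 * N * N) ?_) le_rfl)
      ((hP1 (k + i + j)).trans (c := 3 * N * N - 2 * N) ?_) ?_
    · exact Nat.mul_le_mul_right _ (by omega)
    · have : k + (i : ℕ) + j ≤ 3 * N - 2 := by omega
      refine (Nat.mul_le_mul_right N this).trans ?_
      rw [Nat.sub_mul]
    · have : 1 ≤ N ∨ N = 0 := by omega
      rcases this with h | h
      · have : N ≤ N * N := Nat.le_mul_self N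
        have e : 3 * N * N - 2 * N ≤ 3 * N * N := Nat.sub_le _ _
        nlinarith
      · subst h; simp
  · intro i j
    refine Finset.sum_congr rfl fun k _ => ?_
    rw [add_right_comm]
  · intro x hx hx0 i j
    have ha : eval x (g.coeff m) ≠ 0 := by
      have := Polynomial.leadingCoeff_ne_zero.mpr hx0
      rwa [Polynomial.leadingCoeff, hx, Polynomial.coeff_map] at this
    have haC : ((eval x (g.coeff m) : ℝ) : ℂ) ≠ 0 := by exact_mod_cast ha
    simp only [map_sum, map_mul, map_pow, Complex.ofReal_sum, Complex.ofReal_mul,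
      Complex.ofReal_pow, hP2 _ x hx hx0, Finset.sum_multiset_map_count]
    simp only [Finset.mul_sum]
    rw [Finset.sum_comm]
    refine Finset.sum_congr rfl fun z _ => ?_
    have hQd' : ((Q.map (eval x)).map (algebraMap ℝ ℂ)).natDegree < N + 1 := by
      rw [Polynomial.natDegree_map]
      exact Nat.lt_succ_of_le ((Polynomial.natDegree_map_le).trans hQd)
    rw [wt, Polynomial.eval_eq_sum_range' hQd']
    simp only [Finset.mul_sum, Finset.sum_mul]
    refine Finset.sum_congr rfl fun k hk => ?_
    have hk' : k ≤ N := by simpa [Nat.lt_succ_iff] using hk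
    have e : 2 * N = (2 * N - k) + k := by omega
    rw [div_pow, nsmul_eq_mul, Polynomial.coeff_map, Polynomial.coeff_map, Complex.coe_algebraMap]
    conv_rhs => rw [e, pow_add]
    rw [pow_add, pow_add, pow_add]
    field_simp

/-- Tarski query -/
noncomputable def taq (g Q : Polynomial ℝ) : ℤ :=
  ∑ x ∈ g.roots.toFinset, (SignType.sign (Q.eval x) : ℤ)

open ComplexConjugate in
lemma count_conj (h : Polynomial ℝ) (z : ℂ) :
    (h.map (algebraMap ℝ ℂ)).roots.count (conj z) = (h.map (algebraMap ℝ ℂ)).roots.count z := by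
  have h1 : ((h.map (algebraMap ℝ ℂ)).map (starRingEnd ℂ)).roots =
      (h.map (algebraMap ℝ ℂ)).roots.map (starRingEnd ℂ) :=
    (IsAlgClosed.splits (h.map (algebraMap ℝ ℂ))).roots_map _
  have h2 : (h.map (algebraMap ℝ ℂ)).map (starRingEnd ℂ) = h.map (algebraMap ℝ ℂ) := by
    rw [Polynomial.map_map]
    congr 1
    ext r
    simp
  rw [h2] at h1
  conv_lhs => rw [h1]
  exact Multiset.count_map_eq_count' _ _ (starRingEnd ℂ).injective z

open ComplexConjugate in
lemma eval_conj_real (Q : Polynomial ℝ) (z : ℂ) :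
    (Q.map (algebraMap ℝ ℂ)).eval (conj z) = conj ((Q.map (algebraMap ℝ ℂ)).eval z) := by
  have h2 : (Q.map (algebraMap ℝ ℂ)).map (starRingEnd ℂ) = Q.map (algebraMap ℝ ℂ) := by
    rw [Polynomial.map_map]
    congr 1
    ext r
    simp
  conv_lhs => rw [← h2]
  exact Polynomial.eval_map_apply _ _

lemma eval_ofReal (Q : Polynomial ℝ) (r : ℝ) :
    (Q.map (algebraMap ℝ ℂ)).eval (r : ℂ) = ((Q.eval r : ℝ) : ℂ) :=
  Polynomial.eval_map_apply (algebraMap ℝ ℂ) r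

lemma taq_scl (g Q : Polynomial ℝ) (hg : g ≠ 0) (a : ℝ) (ha : a ≠ 0) (N : ℕ) :
    ∑ z ∈ ((g.scaleRoots a).map (algebraMap ℝ ℂ)).roots.toFinset.filter (fun z => z.im = 0),
      (SignType.sign (wt (g.scaleRoots a) Q a N z).re : ℤ) = taq g Q := by
  symm
  have hs0 : (g.scaleRoots a).map (algebraMap ℝ ℂ) ≠ 0 :=
    (Polynomial.map_ne_zero_iff (algebraMap ℝ ℂ).injective).mpr (Polynomial.scaleRoots_ne_zero hg a)
  have haC : (a : ℂ) ≠ 0 := by exact_mod_cast ha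
  have hmem : ∀ r : ℝ, ((a * r : ℝ) : ℂ) ∈ ((g.scaleRoots a).map (algebraMap ℝ ℂ)).roots ↔
      g.eval r = 0 := by
    intro r
    rw [Polynomial.mem_roots hs0, Polynomial.IsRoot, eval_ofReal, Polynomial.scaleRoots_eval_mul]
    rw [Complex.ofReal_eq_zero, mul_eq_zero]
    constructor
    · rintro (h | h)
      · exact absurd h (pow_ne_zero _ ha)
      · exact h
    · exact Or.inr
  unfold taq
  refine Finset.sum_bij (fun r _ => ((a * r : ℝ) : ℂ)) ?_ ?_ ?_ ?_
  · intro r hr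
    rw [Multiset.mem_toFinset, Polynomial.mem_roots hg] at hr
    rw [Finset.mem_filter, Multiset.mem_toFinset, hmem]
    exact ⟨hr, Complex.ofReal_im _⟩
  · intro r _ r' _ h
    have := Complex.ofReal_injective h
    exact mul_left_cancel₀ ha this
  · intro z hz
    rw [Finset.mem_filter, Multiset.mem_toFinset] at hz
    have hz' : z = ((a * (z.re / a) : ℝ) : ℂ) := by
      rw [mul_div_cancel₀ _ ha]
      exact Complex.ext (by simp) (by simpa using hz.2)
    refine ⟨z.re / a, ?_, hz'.symm⟩
    rw [Multiset.mem_toFinset, Polynomial.mem_roots hg, Polynomial.IsRoot, ← hmem, ← hz']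
    exact hz.1
  · intro r hr
    rw [Multiset.mem_toFinset, Polynomial.mem_roots hg] at hr
    have hc : 0 < ((g.scaleRoots a).map (algebraMap ℝ ℂ)).roots.count ((a * r : ℝ) : ℂ) :=
      Multiset.count_pos.mpr ((hmem r).mpr hr)
    have hw : wt (g.scaleRoots a) Q a N ((a * r : ℝ) : ℂ) =
      (((((g.scaleRoots a).map (algebraMap ℝ ℂ)).roots.count ((a * r : ℝ) : ℂ) : ℝ) *
        (a ^ (2 * N)) * Q.eval r : ℝ) : ℂ) := by
      have : ((a * r : ℝ) : ℂ) / (a : ℂ) = (r : ℂ) := by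
        rw [Complex.ofReal_mul, mul_div_cancel_left₀ _ haC]
      rw [wt, this, eval_ofReal]
      push_cast
      ring
    rw [hw, Complex.ofReal_re]
    have hp : 0 < ((((g.scaleRoots a).map (algebraMap ℝ ℂ)).roots.count ((a * r : ℝ) : ℂ) : ℝ) *
        (a ^ (2 * N))) := by
      have h1 : 0 < a ^ (2 * N) := (even_two_mul N).pow_pos ha
      have h2 : (0 : ℝ) < (((g.scaleRoots a).map (algebraMap ℝ ℂ)).roots.count ((a * r : ℝ) : ℂ) : ℝ) := by
        exact_mod_cast hc
      positivity
    rw [sign_mul, sign_pos hp, one_mul]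

def cb {n : ℕ} (p : Polynomial (MvPolynomial (Fin n) ℝ)) (B : ℕ) : Prop :=
  ∀ i, (p.coeff i).totalDegree ≤ B

lemma cb_mul {n : ℕ} {p q : Polynomial (MvPolynomial (Fin n) ℝ)} {A B C : ℕ} (hp : cb p A)
    (hq : cb q B) (h : A + B ≤ C) : cb (p * q) C := by
  intro i
  rw [Polynomial.coeff_mul]
  exact td_sum fun a _ => td_mul (hp _) (hq _) h

lemma cb_prod {n : ℕ} {ι : Type} (s : Finset ι) (f : ι → Polynomial (MvPolynomial (Fin n) ℝ))
    (B : ℕ) (h : ∀ i ∈ s, cb (f i) B) : cb (∏ i ∈ s, f i) (s.card * B) := by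
  classical
  induction s using Finset.induction_on with
  | empty =>
    intro i
    simp only [Finset.prod_empty, Polynomial.coeff_one]
    split_ifs <;> simp
  | insert a s ha ih =>
    rw [Finset.prod_insert ha, Finset.card_insert_of_notMem ha]
    refine cb_mul (h a (by simp)) (ih fun i hi => h i (by simp [hi])) ?_
    apply le_of_eq; ring

lemma cb_charpoly {n m : ℕ} (H : Matrix (Fin m) (Fin m) (MvPolynomial (Fin n) ℝ)) (B : ℕ)
    (h : ∀ i j, (H i j).totalDegree ≤ B) : cb H.charpoly (m * B) := by
  intro k
  rw [Matrix.charpoly, Matrix.det_apply, Polynomial.finsetSum_coeff]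
  refine td_sum fun σ _ => ?_
  have h1 : cb (∏ i, H.charmatrix (σ i) i) (m * B) := by
    have := cb_prod Finset.univ (fun i => H.charmatrix (σ i) i) B ?_
    · simpa using this
    · intro i _ k
      rw [Matrix.charmatrix_apply, Polynomial.coeff_sub]
      refine (MvPolynomial.totalDegree_sub _ _).trans (max_le ?_ ?_)
      · rw [Matrix.diagonal_apply]
        split_ifs
        · rw [Polynomial.coeff_X]
          split_ifs <;> simp
        · simp
      · rw [Polynomial.coeff_C]
        split_ifs
        · exact h _ _
        · simp
  have h2 := h1 k
  rcases Int.units_eq_one_or (Equiv.Perm.sign σ) with hs | hs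
  · rw [hs]; simpa using h2
  · rw [hs]; simpa using h2

lemma natDegree_congr_sign (p q : Polynomial ℝ)
    (h : ∀ i, SignType.sign (p.coeff i) = SignType.sign (q.coeff i)) :
    p.natDegree = q.natDegree ∧ (p = 0 ↔ q = 0) := by
  have hz : ∀ i, p.coeff i = 0 ↔ q.coeff i = 0 := by
    intro i; rw [← sign_eq_zero_iff, h, sign_eq_zero_iff]
  have hs : p.support = q.support := by
    ext i; simp [hz]
  refine ⟨by simp [Polynomial.natDegree, Polynomial.degree, hs], ?_⟩
  rw [← Polynomial.support_eq_empty, hs, Polynomial.support_eq_empty]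

lemma sign_coeff_congr {n : ℕ} (g : Polynomial (MvPolynomial (Fin n) ℝ)) (N : ℕ)
    (hgd : g.natDegree ≤ N) (x x' : Fin n → ℝ)
    (h : ∀ i : Fin (N + 1), SignType.sign (eval x (g.coeff i)) =
      SignType.sign (eval x' (g.coeff i))) (i : ℕ) :
    SignType.sign ((g.map (eval x)).coeff i) = SignType.sign ((g.map (eval x')).coeff i) := by
  rw [Polynomial.coeff_map, Polynomial.coeff_map]
  by_cases hi : i < N + 1
  · exact h ⟨i, hi⟩
  · rw [Polynomial.coeff_eq_zero_of_natDegree_lt (by omega)]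
    simp

lemma taq_hermite {n : ℕ} (g Q : Polynomial (MvPolynomial (Fin n) ℝ)) (m N : ℕ)
    (H : Matrix (Fin m) (Fin m) (MvPolynomial (Fin n) ℝ)) (hsym : ∀ i j, H i j = H j i)
    (x : Fin n → ℝ) (hx : (g.map (eval x)).natDegree = m) (hx0 : g.map (eval x) ≠ 0)
    (hH : ∀ i j, ((eval x (H i j) : ℝ) : ℂ) =
          ∑ z ∈ ((scl g m x).map (algebraMap ℝ ℂ)).roots.toFinset,
            wt (scl g m x) (Q.map (eval x)) (eval x (g.coeff m)) N z * z ^ ((i : ℕ) + (j : ℕ))) :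
    (H.map (eval x)).IsHermitian ∧
    (((H.map (eval x)).charpoly.roots.countP (0 < ·) : ℕ) : ℤ) -
      ((H.map (eval x)).charpoly.roots.countP (· < 0) : ℕ) =
      taq (g.map (eval x)) (Q.map (eval x)) := by
  have hherm : (H.map (eval x)).IsHermitian := by
    ext i j
    simp [hsym i j]
  refine ⟨hherm, ?_⟩
  have ha : eval x (g.coeff m) ≠ 0 := by
    have := Polynomial.leadingCoeff_ne_zero.mpr hx0
    rwa [Polynomial.leadingCoeff, hx, Polynomial.coeff_map] at this
  rw [← taq_scl _ _ hx0 _ ha N]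
  refine signature_eq (H.map (eval x)) hherm _ _ ?_ ?_ ?_ hH
  · refine (Multiset.toFinset_card_le _).trans ((Polynomial.card_roots' _).trans ?_)
    rw [Polynomial.natDegree_map, Polynomial.natDegree_scaleRoots, hx]
  · intro z hz
    rw [Multiset.mem_toFinset, ← Multiset.count_pos] at hz ⊢
    rwa [count_conj]
  · intro z
    rw [wt, wt, count_conj]
    have : (starRingEnd ℂ) z / ((eval x (g.coeff m) : ℝ) : ℂ) =
        (starRingEnd ℂ) (z / ((eval x (g.coeff m) : ℝ) : ℂ)) := by
      rw [map_div₀, Complex.conj_ofReal]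
    rw [this, eval_conj_real]
    simp

lemma taq_det {n : ℕ} (g Q : Polynomial (MvPolynomial (Fin n) ℝ)) (N : ℕ)
    (hg : cb g N) (hgd : g.natDegree ≤ N) (hQ : cb Q N) (hQd : Q.natDegree ≤ N) :
    ∃ K : (Fin (N + 1) ⊕ Fin (N + 1) × Fin (N + 1)) → MvPolynomial (Fin n) ℝ,
      (∀ i, (K i).totalDegree ≤ 6 * N ^ 3) ∧
      ∀ x x', (∀ i, SignType.sign (eval x (K i)) = SignType.sign (eval x' (K i))) →
        taq (g.map (eval x)) (Q.map (eval x)) = taq (g.map (eval x')) (Q.map (eval x')) := by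
  have hH := fun m : Fin (N + 1) => hermite g Q m N (Nat.lt_succ_iff.mp m.2) hg hQ hQd
  choose H hH1 hH2 hH3 using hH
  refine ⟨Sum.elim (fun i => g.coeff i) (fun mi => (H mi.1).charpoly.coeff mi.2), ?_, ?_⟩
  · rintro (i | ⟨m, i⟩)
    · refine (hg i).trans ?_
      rcases Nat.eq_zero_or_pos N with h | h
      · simp [h]
      · calc N ≤ N * N ^ 2 := Nat.le_mul_of_pos_right _ (by positivity)
          _ ≤ 6 * N ^ 3 := by nlinarith [pow_pos h 3]
    · refine (cb_charpoly (H m) _ (hH1 m) i).trans ?_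
      have : (m : ℕ) ≤ N := Nat.lt_succ_iff.mp m.2
      calc (m : ℕ) * (6 * N ^ 2) ≤ N * (6 * N ^ 2) := Nat.mul_le_mul_right _ this
        _ = 6 * N ^ 3 := by ring
  · intro x x' h
    have hc := sign_coeff_congr g N hgd x x' (fun i => h (Sum.inl i))
    obtain ⟨hd, hz⟩ := natDegree_congr_sign _ _ hc
    by_cases h0 : g.map (eval x) = 0
    · rw [h0, hz.mp h0]; simp [taq]
    have h0' : g.map (eval x') ≠ 0 := fun h => h0 (hz.mpr h)
    set m : Fin (N + 1) := ⟨(g.map (eval x)).natDegree,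
      Nat.lt_succ_of_le (Polynomial.natDegree_map_le.trans hgd)⟩ with hm
    obtain ⟨s1, e1⟩ := taq_hermite g Q m N (H m) (hH2 m) x rfl h0 (hH3 m x rfl h0)
    obtain ⟨s2, e2⟩ := taq_hermite g Q m N (H m) (hH2 m) x' hd.symm h0' (hH3 m x' hd.symm h0')
    rw [← e1, ← e2]
    obtain ⟨d1, d2⟩ := descartes_congr ((H m).map (eval x)).charpoly ((H m).map (eval x')).charpoly
      (Matrix.charpoly_monic _).ne_zero s1.splits_charpoly
      (Matrix.charpoly_monic _).ne_zero s2.splits_charpoly (by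
        rw [Matrix.charpoly_map, Matrix.charpoly_map]
        refine sign_coeff_congr _ N ?_ x x' (fun i => h (Sum.inr (m, i)))
        rw [Matrix.charpoly_natDegree_eq_dim, Fintype.card_fin]
        exact Nat.lt_succ_iff.mp m.2)
    rw [d1, d2]

def co (ε : SignType) : Fin 3 → ℚ :=
  match ε with
  | .zero => ![1, 0, -1]
  | .pos => ![0, 1/2, 1/2]
  | .neg => ![0, -1/2, 1/2]

lemma co_ind (ε s : SignType) :
    (if s = ε then (1 : ℚ) else 0) = ∑ a : Fin 3, co ε a * (((s : ℤ) : ℚ)) ^ (a : ℕ) := by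
  cases ε <;> cases s <;> simp [co, Fin.sum_univ_three] <;> norm_num

lemma count_taq {r : ℕ} (g : Polynomial ℝ) (f : Fin r → Polynomial ℝ) (ε : Fin r → SignType) :
    (((g.roots.toFinset.filter (fun x => ∀ i, SignType.sign ((f i).eval x) = ε i)).card : ℕ) : ℚ) =
      ∑ a : Fin r → Fin 3, (∏ i, co (ε i) (a i)) * (taq g (∏ i, f i ^ (a i : ℕ)) : ℚ) := by
  classical
  have h1 : (((g.roots.toFinset.filter
      (fun x => ∀ i, SignType.sign ((f i).eval x) = ε i)).card : ℕ) : ℚ) =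
      ∑ x ∈ g.roots.toFinset, ∏ i, (if SignType.sign ((f i).eval x) = ε i then (1 : ℚ) else 0) := by
    rw [Finset.card_filter]
    push_cast
    refine Finset.sum_congr rfl fun x _ => ?_
    rw [Finset.prod_boole]
    simp
  rw [h1]
  have h2 : ∀ a : Fin r → Fin 3, (∏ i, co (ε i) (a i)) * (taq g (∏ i, f i ^ (a i : ℕ)) : ℚ) =
      ∑ x ∈ g.roots.toFinset, ∏ i, (co (ε i) (a i) *
        (((SignType.sign ((f i).eval x) : SignType) : ℤ) : ℚ) ^ (a i : ℕ)) := by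
    intro a
    rw [taq]
    push_cast
    rw [Finset.mul_sum]
    refine Finset.sum_congr rfl fun x _ => ?_
    rw [Finset.prod_mul_distrib]
    congr 1
    rw [Polynomial.eval_prod]
    have : SignType.sign (∏ i, ((f i) ^ (a i : ℕ)).eval x) =
        ∏ i, (SignType.sign ((f i).eval x)) ^ (a i : ℕ) := by
      have := map_prod (signHom : ℝ →*₀ SignType) (fun i => ((f i) ^ (a i : ℕ)).eval x) Finset.univ
      refine this.trans ?_
      refine Finset.prod_congr rfl fun i _ => ?_
      rw [Polynomial.eval_pow]
      exact map_pow (signHom : ℝ →*₀ SignType) _ _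
    rw [this]
    have h3 : ∀ (s : Finset (Fin r)) (φ : Fin r → SignType),
      (((∏ i ∈ s, φ i ^ (a i : ℕ) : SignType) : ℤ) : ℚ) =
        ∏ i ∈ s, (((φ i : SignType) : ℤ) : ℚ) ^ (a i : ℕ) := by
      intro s φ
      have := map_prod (SignType.castHom : SignType →*₀ ℤ) (fun i => φ i ^ (a i : ℕ)) s
      have h4 : ((∏ i ∈ s, φ i ^ (a i : ℕ) : SignType) : ℤ) =
        ∏ i ∈ s, ((φ i : SignType) : ℤ) ^ (a i : ℕ) := by
        refine this.trans (Finset.prod_congr rfl fun i _ => ?_)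
        exact map_pow (SignType.castHom : SignType →*₀ ℤ) _ _
      rw [h4]; push_cast; rfl
    have h5 := h3 Finset.univ (fun i => SignType.sign ((f i).eval x))
    push_cast at h5
    exact h5
  simp_rw [h2]
  rw [Finset.sum_comm]
  refine Finset.sum_congr rfl fun x _ => ?_
  simp_rw [co_ind]
  rw [Finset.prod_univ_sum]
  simp

lemma realize_taq {r : ℕ} (g g' : Polynomial ℝ) (f f' : Fin r → Polynomial ℝ)
    (h : ∀ a : Fin r → Fin 3, taq g (∏ i, f i ^ (a i : ℕ)) = taq g' (∏ i, f' i ^ (a i : ℕ)))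
    (x : ℝ) (hx : x ∈ g.roots) :
    ∃ x' ∈ g'.roots, ∀ i, SignType.sign ((f' i).eval x') = SignType.sign ((f i).eval x) := by
  have h1 := count_taq g f (fun i => SignType.sign ((f i).eval x))
  have h2 := count_taq g' f' (fun i => SignType.sign ((f i).eval x))
  simp_rw [h] at h1
  rw [← h2] at h1
  have h3 : 0 < (g.roots.toFinset.filter
      (fun y => ∀ i, SignType.sign ((f i).eval y) = SignType.sign ((f i).eval x))).card := by
    rw [Finset.card_pos]
    exact ⟨x, by simpa using hx⟩
  have h4 := Nat.cast_injective h1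
  rw [h4, Finset.card_pos] at h3
  obtain ⟨x', hx'⟩ := h3
  rw [Finset.mem_filter, Multiset.mem_toFinset] at hx'
  exact ⟨x', hx'⟩

lemma realize_full {ι : Type} [Nonempty ι] {r : ℕ} (g' : Polynomial ℝ) (hr : g'.natDegree ≤ r)
    (f f' : ι → Polynomial ℝ) (x : ℝ)
    (h : ∀ c : Fin r → ι, ∃ x' ∈ g'.roots,
      ∀ i, SignType.sign ((f' (c i)).eval x') = SignType.sign ((f (c i)).eval x)) :
    ∃ x' ∈ g'.roots, ∀ i, SignType.sign ((f' i).eval x') = SignType.sign ((f i).eval x) := by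
  classical
  by_contra hc
  push Not at hc
  have hcard : g'.roots.toFinset.card ≤ r :=
    (Multiset.toFinset_card_le _).trans ((Polynomial.card_roots' _).trans hr)
  choose! w hw using hc
  set em := g'.roots.toFinset.equivFin
  obtain ⟨i0⟩ := ‹Nonempty ι›
  obtain ⟨x', hx', hx2⟩ := h (fun i => if hi : (i : ℕ) < g'.roots.toFinset.card
    then w (em.symm ⟨i, hi⟩) else i0)
  have hm : x' ∈ g'.roots.toFinset := Multiset.mem_toFinset.mpr hx'
  have := hx2 ⟨em ⟨x', hm⟩, lt_of_lt_of_le (em ⟨x', hm⟩).2 hcard⟩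
  simp at this
  exact hw x' hx' this

lemma sign_const (p : Polynomial ℝ) (x y : ℝ) (h : p ≠ 0 → ∀ z ∈ Set.uIcc x y, p.eval z ≠ 0) :
    SignType.sign (p.eval x) = SignType.sign (p.eval y) := by
  by_cases hp : p = 0
  · simp [hp]
  have h := h hp
  have hiv := intermediate_value_uIcc (p.continuous.continuousOn (s := Set.uIcc x y))
  have h0 : (0 : ℝ) ∉ Set.uIcc (p.eval x) (p.eval y) := fun h0 => by
    obtain ⟨z, hz, hz0⟩ := hiv h0
    exact h z hz hz0
  rw [Set.mem_uIcc] at h0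
  push Not at h0
  have hx := h x Set.left_mem_uIcc
  have hy := h y Set.right_mem_uIcc
  rcases lt_or_gt_of_ne hx with h1 | h1
  · have := h0.1 h1.le
    rw [sign_neg h1, sign_neg this]
  · rcases lt_or_gt_of_ne hy with h2 | h2
    · exact absurd (h0.2 h2.le) (not_lt.mpr h1.le)
    · rw [sign_pos h1, sign_pos h2]

lemma sign_top (p : Polynomial ℝ) :
    ∀ᶠ y in Filter.atTop, SignType.sign (p.eval y) = SignType.sign p.leadingCoeff := by
  by_cases hp : p = 0
  · simp [hp]
  have he := p.isEquivalent_atTop_lead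
  obtain ⟨φ, hφ, h1⟩ := he.exists_eq_mul
  have h2 : ∀ᶠ y in Filter.atTop, 0 < φ y := hφ.eventually (lt_mem_nhds one_pos)
  filter_upwards [h1, h2, Filter.eventually_gt_atTop 0] with y hy hp hy0
  rw [hy, Pi.mul_apply, sign_mul, sign_mul, sign_pos (pow_pos hy0 _), sign_pos hp, mul_one, one_mul]

lemma sample_top {ι : Type} [Fintype ι] (f f' : ι → Polynomial ℝ)
    (hc : ∀ i n, SignType.sign ((f i).coeff n) = SignType.sign ((f' i).coeff n)) (x : ℝ)
    (hx : ∀ i, f i ≠ 0 → ∀ y, x ≤ y → (f i).eval y ≠ 0) :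
    ∃ x', ∀ j, SignType.sign ((f' j).eval x') = SignType.sign ((f j).eval x) := by
  have h1 : ∀ᶠ y in Filter.atTop, ∀ j, SignType.sign ((f j).eval y) =
      SignType.sign (f j).leadingCoeff := Filter.eventually_all.mpr fun j => sign_top _
  have h2 : ∀ᶠ y in Filter.atTop, ∀ j, SignType.sign ((f' j).eval y) =
      SignType.sign (f' j).leadingCoeff := Filter.eventually_all.mpr fun j => sign_top _
  obtain ⟨y, ⟨hy1, hy2⟩, hy3⟩ := ((h1.and h2).and (Filter.eventually_ge_atTop x)).exists
  refine ⟨y, fun j => ?_⟩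
  rw [hy2 j, Polynomial.leadingCoeff, ← (natDegree_congr_sign _ _ (hc j)).1, ← hc,
    sign_const (f j) x y, hy1 j, Polynomial.leadingCoeff]
  intro h0 z hz
  rw [Set.uIcc_of_le hy3] at hz
  exact hx j h0 z hz.1

lemma coeff_comp_neg (p : Polynomial ℝ) (n : ℕ) :
    (p.comp (-Polynomial.X)).coeff n = (-1) ^ n * p.coeff n := by
  have h : (-Polynomial.X : Polynomial ℝ) = Polynomial.C (-1) * Polynomial.X := by simp
  rw [h, Polynomial.comp_C_mul_X_coeff, mul_comm]

lemma sample {ι : Type} [Fintype ι] (f f' : ι → Polynomial ℝ)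
    (hc : ∀ i n, SignType.sign ((f i).coeff n) = SignType.sign ((f' i).coeff n))
    (h1 : ∀ i, ∀ x ∈ (f i).roots,
      ∃ x', ∀ j, SignType.sign ((f' j).eval x') = SignType.sign ((f j).eval x))
    (h2 : ∀ i j, ∀ x ∈ (Polynomial.derivative (f i * f j)).roots,
      ∃ x', ∀ l, SignType.sign ((f' l).eval x') = SignType.sign ((f l).eval x)) (x : ℝ) :
    ∃ x', ∀ j, SignType.sign ((f' j).eval x') = SignType.sign ((f j).eval x) := by
  classical
  set R : Finset ℝ := Finset.univ.biUnion fun i => (f i).roots.toFinset with hR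
  have hmem : ∀ y, y ∈ R ↔ ∃ i, f i ≠ 0 ∧ (f i).eval y = 0 := by
    intro y; simp [hR]
  by_cases hx : x ∈ R
  · obtain ⟨i, hi, hi0⟩ := (hmem x).mp hx
    exact h1 i x ((Polynomial.mem_roots hi).mpr hi0)
  by_cases htop : ∀ y ∈ R, y < x
  · refine sample_top f f' hc x fun i hi y hy h0 => ?_
    exact absurd (htop y ((hmem y).mpr ⟨i, hi, h0⟩)) (not_lt.mpr hy)
  by_cases hbot : ∀ y ∈ R, x < y
  · obtain ⟨x', hx'⟩ := sample_top (fun i => (f i).comp (-Polynomial.X))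
      (fun i => (f' i).comp (-Polynomial.X)) (by
        intro i n
        rw [coeff_comp_neg, coeff_comp_neg, sign_mul, sign_mul, hc]) (-x) (by
        intro i hi y hy h0
        have hi' : f i ≠ 0 := by rintro h; simp [h] at hi
        rw [Polynomial.eval_comp, Polynomial.eval_neg, Polynomial.eval_X] at h0
        have := hbot (-y) ((hmem _).mpr ⟨i, hi', h0⟩)
        linarith)
    refine ⟨-x', fun j => ?_⟩
    have := hx' j
    simpa using this
  push Not at htop hbot
  obtain ⟨b0, hb0, hb0x⟩ := htop
  obtain ⟨a0, ha0, ha0x⟩ := hbot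
  have hUne : (R.filter (fun y => x ≤ y)).Nonempty := ⟨b0, by simp [hb0, hb0x]⟩
  have hLne : (R.filter (fun y => y ≤ x)).Nonempty := ⟨a0, by simp [ha0, ha0x]⟩
  obtain ⟨β, hβ, hβm⟩ := Finset.exists_min_image _ id hUne
  obtain ⟨α, hα, hαm⟩ := Finset.exists_max_image _ id hLne
  rw [Finset.mem_filter] at hβ hα
  have hαx : α < x := lt_of_le_of_ne hα.2 (fun h => hx (h ▸ hα.1))
  have hxβ : x < β := lt_of_le_of_ne hβ.2 (fun h => hx (h ▸ hβ.1))
  have hno : ∀ y, α < y → y < β → y ∉ R := by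
    intro y hy1 hy2 hy
    rcases le_total x y with h | h
    · exact absurd (hβm y (by simp [hy, h])) (not_le.mpr hy2)
    · exact absurd (hαm y (by simp [hy, h])) (not_le.mpr hy1)
  obtain ⟨i, hi, hi0⟩ := (hmem α).mp hα.1
  obtain ⟨j, hj, hj0⟩ := (hmem β).mp hβ.1
  obtain ⟨c, hcm, hc0⟩ := exists_hasDerivAt_eq_zero (f := fun y => (f i * f j).eval y)
    (f' := fun y => (Polynomial.derivative (f i * f j)).eval y) (hαx.trans hxβ)
    (f i * f j).continuous.continuousOn (by simp [hi0, hj0])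
    (fun y _ => (f i * f j).hasDerivAt y)
  have hd : Polynomial.derivative (f i * f j) ≠ 0 := by
    intro h
    have h3 := Polynomial.derivative_eq_zero.mp h
    obtain ⟨r, hr⟩ := Polynomial.natDegree_eq_zero.mp h3
    have h4 : (f i * f j).eval α = 0 := by simp [hi0]
    rw [← hr, Polynomial.eval_C] at h4
    rw [h4, Polynomial.C_0] at hr
    exact mul_ne_zero hi hj hr.symm
  obtain ⟨x', hx'⟩ := h2 i j c ((Polynomial.mem_roots hd).mpr hc0)
  refine ⟨x', fun l => ?_⟩
  rw [hx' l]
  refine sign_const _ _ _ fun hl z hz h0 => ?_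
  have hzab : z ∈ Set.Ioo α β := Set.OrdConnected.uIcc_subset Set.ordConnected_Ioo hcm ⟨hαx, hxβ⟩ hz
  exact hno z hzab.1 hzab.2 ((hmem z).mpr ⟨l, hl, h0⟩)

/-- membership in `T` is determined by the signs of few polynomials of low degree -/
def Det (n s t : ℕ) (T : Set (Fin n → ℝ)) : Prop :=
  ∃ (ι : Type) (_ : Fintype ι) (_ : Nonempty ι) (F : ι → MvPolynomial (Fin n) ℝ),
    Fintype.card ι ≤ s ∧ (∀ i, (F i).totalDegree ≤ t) ∧
    ∀ x x', (∀ i, SignType.sign (eval x (F i)) = SignType.sign (eval x' (F i))) → x ∈ T → x' ∈ T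

lemma cb_fin {n t : ℕ} (F : MvPolynomial (Fin (n + 1)) ℝ) (h : F.totalDegree ≤ t) :
    cb (finSuccEquiv ℝ n F) t ∧ (finSuccEquiv ℝ n F).natDegree ≤ t := by
  constructor
  · intro i
    by_cases h0 : (finSuccEquiv ℝ n F).coeff i = 0
    · rw [h0]; simp
    · have := totalDegree_coeff_finSuccEquiv_add_le F i h0
      omega
  · rw [natDegree_finSuccEquiv]
    exact (degreeOf_le_totalDegree F 0).trans h

lemma cb_derivative {n t : ℕ} (p : Polynomial (MvPolynomial (Fin n) ℝ)) (h : cb p t) :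
    cb (Polynomial.derivative p) t := by
  intro i
  rw [Polynomial.coeff_derivative]
  refine td_mul (h _) (B := 0) ?_ le_rfl
  have : ((i : MvPolynomial (Fin n) ℝ) + 1) = C ((i : ℝ) + 1) := by simp
  rw [this, totalDegree_C]

lemma cb_pow3 {n t : ℕ} (p : Polynomial (MvPolynomial (Fin n) ℝ)) (h : cb p t) (a : Fin 3) :
    cb (p ^ (a : ℕ)) (2 * t) := by
  have h1 := cb_prod (Finset.univ : Finset (Fin (a : ℕ))) (fun _ => p) t (fun _ _ => h)
  simp only [Finset.prod_const, Finset.card_univ, Fintype.card_fin] at h1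
  intro i
  refine (h1 i).trans (Nat.mul_le_mul_right _ ?_)
  have := a.2
  omega

lemma card_bound (s t : ℕ) (hs : 2 ≤ s) (ht : 2 ≤ t) :
    (s + s * s) * ((s * 3) ^ (2 * t) * ((4 * t ^ 2 + 1) + (4 * t ^ 2 + 1) * (4 * t ^ 2 + 1)))
      + s * (t + 1) ≤ s ^ (t ^ 15) := by
  have hpw : ∀ m, 2 ^ m ≤ s ^ m := fun m => Nat.pow_le_pow_left hs m
  have ht1 : t + 1 ≤ s ^ t := (Nat.lt_two_pow_self).trans_le (hpw t)
  have h1 : s + s * s ≤ s ^ 3 := by nlinarith [Nat.mul_le_mul hs hs]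
  have h2 : (s * 3) ^ (2 * t) ≤ s ^ (6 * t) := by
    calc (s * 3) ^ (2 * t) ≤ (s ^ 3) ^ (2 * t) := by
          apply Nat.pow_le_pow_left; nlinarith [Nat.mul_le_mul hs hs]
      _ = s ^ (6 * t) := by rw [← pow_mul]; congr 1; ring
  have h3 : 4 * t ^ 2 + 1 ≤ s ^ (3 + 2 * t) := by
    calc 4 * t ^ 2 + 1 ≤ 2 ^ 3 * (t * t) := by nlinarith
      _ ≤ s ^ 3 * (s ^ t * s ^ t) :=
        Nat.mul_le_mul (hpw 3) (Nat.mul_le_mul (by omega) (by omega))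
      _ = s ^ (3 + 2 * t) := by ring
  have h4 : (4 * t ^ 2 + 1) + (4 * t ^ 2 + 1) * (4 * t ^ 2 + 1) ≤ s ^ (7 + 4 * t) := by
    calc (4 * t ^ 2 + 1) + (4 * t ^ 2 + 1) * (4 * t ^ 2 + 1)
        ≤ 2 * ((4 * t ^ 2 + 1) * (4 * t ^ 2 + 1)) := by nlinarith [Nat.zero_le (t ^ 2)]
      _ ≤ s * (s ^ (3 + 2 * t) * s ^ (3 + 2 * t)) := Nat.mul_le_mul hs (Nat.mul_le_mul h3 h3)
      _ = s ^ (7 + 4 * t) := by ring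
  have hmono : ∀ a b, a ≤ b → s ^ a ≤ s ^ b := fun a b h => Nat.pow_le_pow_right (by omega) h
  calc _ ≤ s ^ 3 * (s ^ (6 * t) * s ^ (7 + 4 * t)) + s * s ^ t :=
        add_le_add (Nat.mul_le_mul h1 (Nat.mul_le_mul h2 h4)) (Nat.mul_le_mul_left _ ht1)
    _ = s ^ (10 + 10 * t) + s ^ (1 + t) := by ring
    _ ≤ s ^ (10 + 10 * t) + s ^ (10 + 10 * t) := by
        have := hmono (1 + t) (10 + 10 * t) (by omega); omega
    _ = 2 * s ^ (10 + 10 * t) := by ring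
    _ ≤ s * s ^ (10 + 10 * t) := Nat.mul_le_mul_right _ hs
    _ = s ^ (11 + 10 * t) := by ring
    _ ≤ s ^ (t ^ 15) := by
      apply hmono
      have h5 : 2 ^ 14 ≤ t ^ 14 := Nat.pow_le_pow_left ht 14
      calc 11 + 10 * t ≤ 2 ^ 14 * t := by omega
        _ ≤ t ^ 14 * t := Nat.mul_le_mul_right _ h5
        _ = t ^ 15 := by ring

lemma Det.proj {n s t : ℕ} {T : Set (Fin (n + 1) → ℝ)} (h : Det (n + 1) s t T)
    (hs : 2 ≤ s) (ht : 2 ≤ t) :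
    Det n (s ^ (t ^ 15)) (t ^ 15) {x | ∃ a : ℝ, (Fin.cons a x : Fin (n + 1) → ℝ) ∈ T} := by
  classical
  obtain ⟨ι, _, hne, F, hcard, hdeg, hT⟩ := h
  set f : ι → Polynomial (MvPolynomial (Fin n) ℝ) := fun i => finSuccEquiv ℝ n (F i) with hf
  have hfc : ∀ i, cb (f i) t := fun i => (cb_fin _ (hdeg i)).1
  have hfd : ∀ i, (f i).natDegree ≤ t := fun i => (cb_fin _ (hdeg i)).2
  set G : ι ⊕ ι × ι → Polynomial (MvPolynomial (Fin n) ℝ) :=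
    Sum.elim f (fun p => Polynomial.derivative (f p.1 * f p.2)) with hG
  have hGc : ∀ a, cb (G a) (2 * t) := by
    rintro (i | ⟨i, j⟩)
    · exact fun m => (hfc i m).trans (by omega)
    · exact cb_derivative _ (cb_mul (hfc i) (hfc j) (by omega))
  have hGd : ∀ a, (G a).natDegree ≤ 2 * t := by
    rintro (i | ⟨i, j⟩)
    · exact (hfd i).trans (by omega)
    · refine (Polynomial.natDegree_derivative_le _).trans ?_
      have h1 : (f i * f j).natDegree ≤ _ := Polynomial.natDegree_mul_le
      have h2 := hfd i
      have h3 := hfd j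
      simp only
      omega
  set Q : (Fin (2 * t) → ι × Fin 3) → Polynomial (MvPolynomial (Fin n) ℝ) :=
    fun c => ∏ i, f (c i).1 ^ ((c i).2 : ℕ) with hQ
  have hNt : 2 * t ≤ 4 * t ^ 2 := by nlinarith
  have hQc : ∀ c, cb (Q c) (4 * t ^ 2) := by
    intro c m
    have := cb_prod Finset.univ (fun i => f (c i).1 ^ ((c i).2 : ℕ)) (2 * t)
      (fun i _ => cb_pow3 _ (hfc _) _) m
    refine this.trans (le_of_eq ?_)
    rw [Finset.card_univ, Fintype.card_fin]; ring
  have hQd : ∀ c, (Q c).natDegree ≤ 4 * t ^ 2 := by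
    intro c
    refine (Polynomial.natDegree_prod_le _ _).trans ?_
    refine (Finset.sum_le_card_nsmul Finset.univ _ (2 * t) ?_).trans (le_of_eq ?_)
    · intro i _
      refine Polynomial.natDegree_pow_le.trans (Nat.mul_le_mul ?_ (hfd _))
      have := (c i).2.2
      omega
    · rw [Finset.card_univ, Fintype.card_fin, smul_eq_mul]; ring
  have hK := fun a c => taq_det (G a) (Q c) (4 * t ^ 2)
    (fun m => (hGc a m).trans hNt) ((hGd a).trans hNt) (hQc c) (hQd c)
  choose K hK1 hK2 using hK
  refine ⟨((ι ⊕ ι × ι) × ((Fin (2 * t) → ι × Fin 3) ×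
    (Fin (4 * t ^ 2 + 1) ⊕ Fin (4 * t ^ 2 + 1) × Fin (4 * t ^ 2 + 1)))) ⊕ ι × Fin (t + 1),
    inferInstance, ⟨Sum.inr (hne.some, 0)⟩,
    Sum.elim (fun p => K p.1 p.2.1 p.2.2) (fun p => (f p.1).coeff p.2), ?_, ?_, ?_⟩
  · refine le_trans ?_ (card_bound s t hs ht)
    simp only [Fintype.card_sum, Fintype.card_prod, Fintype.card_fun, Fintype.card_fin]
    gcongr
  · have h512 : 384 ≤ t ^ 9 := by
      have : 2 ^ 9 ≤ t ^ 9 := Nat.pow_le_pow_left ht 9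
      omega
    rintro (⟨a, c, i⟩ | ⟨i, m⟩)
    · refine (hK1 a c i).trans ?_
      calc 6 * (4 * t ^ 2) ^ 3 = 384 * t ^ 6 := by ring
        _ ≤ t ^ 9 * t ^ 6 := Nat.mul_le_mul_right _ h512
        _ = t ^ 15 := by ring
    · exact (hfc i m).trans (Nat.le_self_pow (by norm_num) t)
  · rintro x x' hxx ⟨a, ha⟩
    have htaq : ∀ q c, taq ((G q).map (eval x)) ((Q c).map (eval x)) =
        taq ((G q).map (eval x')) ((Q c).map (eval x')) :=
      fun q c => hK2 q c x x' fun i => hxx (Sum.inl (q, c, i))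
    have hreal : ∀ q, ∀ y ∈ ((G q).map (eval x)).roots, ∃ y' ∈ ((G q).map (eval x')).roots,
        ∀ i, SignType.sign (((f i).map (eval x')).eval y') =
          SignType.sign (((f i).map (eval x)).eval y) := by
      intro q y hy
      refine realize_full (r := 2 * t) _ (Polynomial.natDegree_map_le.trans (hGd q)) _ _ y ?_
      intro c
      refine realize_taq _ _ (fun i => (f (c i)).map (eval x)) (fun i => (f (c i)).map (eval x'))
        ?_ y hy
      intro e
      have := htaq q (fun i => (c i, e i))
      simpa [hQ, Polynomial.map_prod, Polynomial.map_pow] using this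
    obtain ⟨a', ha'⟩ := sample (fun i => (f i).map (eval x)) (fun i => (f i).map (eval x'))
      (fun i => sign_coeff_congr (f i) t (hfd i) x x' fun m => hxx (Sum.inr (i, m)))
      (by
        intro i y hy
        obtain ⟨y', _, h⟩ := hreal (Sum.inl i) y hy
        exact ⟨y', h⟩)
      (by
        intro i j y hy
        obtain ⟨y', _, h⟩ := hreal (Sum.inr (i, j)) y (by
          simpa [hG, Polynomial.derivative_map, Polynomial.map_mul] using hy)
        exact ⟨y', h⟩) a
    refine ⟨a', hT _ _ ?_ ha⟩
    intro i
    rw [eval_eq_eval_mv_eval', eval_eq_eval_mv_eval']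
    exact (ha' i).symm

lemma Det.mono {n s t s' t' : ℕ} {T : Set (Fin n → ℝ)} (h : Det n s t T) (hs : s ≤ s')
    (ht : t ≤ t') : Det n s' t' T := by
  obtain ⟨ι, i1, i2, F, h1, h2, h3⟩ := h
  exact ⟨ι, i1, i2, F, h1.trans hs, fun i => (h2 i).trans ht, h3⟩

def glue {M d : ℕ} (u : Fin d → ℝ) (z : Fin M → ℝ) : Fin (M + d) → ℝ :=
  fun i => if h : (i : ℕ) < d then u ⟨i, h⟩ else z ⟨i - d, by omega⟩

lemma glue_cons {M d : ℕ} (a : ℝ) (u : Fin d → ℝ) (z : Fin M → ℝ) :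
    (Fin.cons a (glue u z) : Fin ((M + d) + 1) → ℝ) =
      glue (d := d + 1) (Fin.cons a u : Fin (d + 1) → ℝ) z := by
  funext i
  refine Fin.cases ?_ (fun i => ?_) i
  · simp [glue]
  · simp only [Fin.cons_succ, glue, Fin.val_succ, Nat.succ_lt_succ_iff]
    split_ifs with h
    · exact (Fin.cons_succ (α := fun _ => ℝ) a u ⟨i, h⟩).symm
    · congr 2
      omega

lemma Det.iter (d : ℕ) : ∃ c : ℕ, ∀ (M s t : ℕ) (T : Set (Fin (M + d) → ℝ)), 2 ≤ s → 2 ≤ t →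
    Det (M + d) s t T →
    Det M (s ^ (t ^ c)) (t ^ c) {z | ∃ u : Fin d → ℝ, glue u z ∈ T} := by
  induction d with
  | zero =>
    refine ⟨1, fun M s t T hs ht h => ?_⟩
    have : {z : Fin M → ℝ | ∃ u : Fin 0 → ℝ, glue u z ∈ T} = T := by
      ext z
      have hg : ∀ u : Fin 0 → ℝ, glue u z = z := by
        intro u; funext i; simp [glue]
      simp [hg]
    rw [this]
    exact h.mono (Nat.le_self_pow (by simp; omega) s) (by simp)
  | succ d ih =>
    obtain ⟨c, hc⟩ := ih
    refine ⟨15 + 15 * c, fun M s t T hs ht h => ?_⟩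
    have h1 := Det.proj (n := M + d) h hs ht
    have h2 := hc M _ _ _ (hs.trans (Nat.le_self_pow (by positivity) s))
      (ht.trans (Nat.le_self_pow (by norm_num) t)) h1
    have : {z : Fin M → ℝ | ∃ u : Fin (d + 1) → ℝ, glue u z ∈ T} = {z | ∃ u : Fin d → ℝ,
        glue u z ∈ {x | ∃ a : ℝ, (Fin.cons a x : Fin ((M + d) + 1) → ℝ) ∈ T}} := by
      ext z
      simp only [Set.mem_ofPred_eq]
      constructor
      · rintro ⟨u, hu⟩
        refine ⟨Fin.tail u, u 0, ?_⟩
        rw [glue_cons, Fin.cons_self_tail]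
        exact hu
      · rintro ⟨u, a, hu⟩
        rw [glue_cons] at hu
        exact ⟨_, hu⟩
    rw [this]
    refine h2.mono (le_of_eq ?_) ?_
    · rw [← pow_mul, ← pow_mul, ← pow_add]
    · rw [← pow_mul]
      exact Nat.pow_le_pow_right (by omega) (by omega)

lemma sign_of_atoms {a b : ℝ} (h1 : a < 0 ↔ b < 0) (h2 : a = 0 ↔ b = 0) :
    SignType.sign a = SignType.sign b := by
  rcases lt_trichotomy a 0 with h | h | h
  · rw [sign_neg h, sign_neg (h1.mp h)]
  · rw [h, h2.mp h]
  · have hb : 0 < b := by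
      rcases lt_trichotomy b 0 with h' | h' | h'
      · exact absurd (h1.mpr h') (not_lt.mpr h.le)
      · exact absurd (h2.mpr h') h.ne'
      · exact h'
    rw [sign_pos h, sign_pos hb]

lemma Det.defined {M s t : ℕ} {T : Set (Fin M → ℝ)} (h : Det M s t T) (t' : ℝ) (ht : (t : ℝ) ≤ t') :
    ∃ L ≤ 2 * s, DefinedByPolys T L t' := by
  obtain ⟨ι, i1, i2, F, h1, h2, h3⟩ := h
  set em := Fintype.equivFin (ι × Bool)
  refine ⟨Fintype.card (ι × Bool), ?_, fun i => F (em.symm i).1, fun i => (em.symm i).2,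
    fun p => ∃ x ∈ T, ∀ i, p i ↔
      (if (em.symm i).2 then eval x (F (em.symm i).1) < 0 else eval x (F (em.symm i).1) = 0),
    ?_, ?_⟩
  · rw [Fintype.card_prod, Fintype.card_bool]; omega
  · intro i
    exact le_trans (by exact_mod_cast h2 _) ht
  · ext x
    constructor
    · intro hx
      exact ⟨x, hx, fun i => Iff.rfl⟩
    · rintro ⟨x0, hx0, hx⟩
      refine h3 x0 x (fun i => ?_) hx0
      have a1 := hx (em (i, true))
      have a2 := hx (em (i, false))
      simp only [Equiv.symm_apply_apply, if_true, Bool.false_eq_true, if_false] at a1 a2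
      exact sign_of_atoms a1.symm a2.symm

lemma num_bound (c k : ℕ) (hk : 1 ≤ k) (L : ℕ)
    (hL : L ≤ 2 * (2 ^ (k + 1)) ^ ((2 ^ (k + 1)) ^ c)) :
    (L : ℝ) ≤ Real.exp ((2 : ℝ) ^ (k * (2 * (c + 1)))) := by
  have h0 : 1 + (k + 1) * (2 ^ (k + 1)) ^ c ≤ 2 ^ (k * (2 * (c + 1))) := by
    have h1 : k + 2 ≤ 2 ^ (k + 1) := Nat.lt_two_pow_self
    have h2 : 1 ≤ (2 ^ (k + 1)) ^ c := Nat.one_le_two_pow.trans (le_of_eq (by rw [pow_mul]))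
      |>.trans le_rfl
    calc 1 + (k + 1) * (2 ^ (k + 1)) ^ c ≤ (k + 2) * (2 ^ (k + 1)) ^ c := by nlinarith
      _ ≤ 2 ^ (k + 1) * (2 ^ (k + 1)) ^ c := Nat.mul_le_mul_right _ h1
      _ = 2 ^ ((k + 1) * (c + 1)) := by rw [← pow_succ', ← pow_mul]
      _ ≤ 2 ^ (k * (2 * (c + 1))) := by
        apply Nat.pow_le_pow_right (by norm_num)
        nlinarith
  have h3 : L ≤ 2 ^ (1 + (k + 1) * (2 ^ (k + 1)) ^ c) := by
    refine hL.trans (le_of_eq ?_)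
    rw [pow_add 2 1 ((k + 1) * _), pow_mul, pow_one]
  calc (L : ℝ) ≤ (2 : ℝ) ^ (1 + (k + 1) * (2 ^ (k + 1)) ^ c) := by exact_mod_cast h3
    _ ≤ (Real.exp 1) ^ (1 + (k + 1) * (2 ^ (k + 1)) ^ c) := by
      gcongr
      have := Real.add_one_le_exp (1 : ℝ)
      linarith
    _ = Real.exp ((1 + (k + 1) * (2 ^ (k + 1)) ^ c : ℕ) : ℝ) := by
      rw [← Real.exp_nat_mul, mul_one]
    _ ≤ _ := by
      apply Real.exp_le_exp.mpr
      exact_mod_cast h0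

lemma le_choose (m d : ℕ) (hd : 1 ≤ d) : m < Nat.choose (m + d) d := by
  have h1 : Nat.choose (m + d) d = Nat.choose (m + d) m := Nat.choose_symm_add.symm
  have h2 : Nat.choose (m + 1) m ≤ Nat.choose (m + d) m := Nat.choose_le_choose m (by omega)
  rw [Nat.choose_succ_self_right] at h2
  omega

lemma init_det (b d k M : ℕ) (hd : 1 ≤ d) (hk : 1 ≤ k) (hbk : b ≤ k)
    (Dj : Fin k → ℕ) (hDj : ∀ j : Fin k,
      IsLeast {m : ℕ | 0 < m ∧ 2 ^ (j : ℕ) < Nat.choose (m + d) d} (Dj j))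
    (V : Fin k → Submodule ℝ (MvPolynomial (Fin d) ℝ))
    (hV : ∀ j, ∀ p ∈ V j, p.totalDegree ≤ Dj j)
    (S : Set (Fin d → ℝ)) (hS : IsSemiAlgebraicOfComplexity d b S) (σ : Fin k → Bool)
    (e : ((j : Fin k) → V j) ≃ₗ[ℝ] (Fin M → ℝ)) :
    ∃ T : Set (Fin (M + d) → ℝ), Det (M + d) (2 ^ (k + 1)) (2 ^ (k + 1)) T ∧
      ((⇑e) '' {y : (j : Fin k) → V j |
              (S ∩ {u : Fin d → ℝ | ∀ j : Fin k,
                if σ j then 0 < eval u ((y j : MvPolynomial (Fin d) ℝ))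
                else eval u ((y j : MvPolynomial (Fin d) ℝ)) < 0}).Nonempty}) =
        {z | ∃ u : Fin d → ℝ, glue u z ∈ T} := by
  classical
  set uv : Fin d → Fin (M + d) := fun i => ⟨i, by omega⟩ with huv
  set zv : Fin M → Fin (M + d) := fun i => ⟨d + i, by omega⟩ with hzv
  have gu : ∀ (u : Fin d → ℝ) (z : Fin M → ℝ), glue u z ∘ uv = u := by
    intro u z; funext i; simp [glue, huv]
  have gz : ∀ (u : Fin d → ℝ) (z : Fin M → ℝ), glue u z ∘ zv = z := by
    intro u z; funext i; simp [glue, hzv]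
  refine ⟨{w | w ∘ uv ∈ S ∧ ∀ j : Fin k,
    if σ j then 0 < eval (w ∘ uv) ((e.symm (w ∘ zv) j : MvPolynomial (Fin d) ℝ))
                else eval (w ∘ uv) ((e.symm (w ∘ zv) j : MvPolynomial (Fin d) ℝ)) < 0}, ?_, ?_⟩
  · obtain ⟨P, τ, φ, hP, rfl⟩ := hS
    have hk2 : k + 1 ≤ 2 ^ k := Nat.lt_two_pow_self
    have hkk : 2 ^ (k + 1) = 2 * 2 ^ k := by ring
    set F : Fin b ⊕ Fin k → MvPolynomial (Fin (M + d)) ℝ :=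
      Sum.elim (fun i => rename uv (P i))
        (fun j => ∑ i, X (zv i) * rename uv
          ((e.symm (Pi.single i 1) j : MvPolynomial (Fin d) ℝ))) with hF
    have hev : ∀ w j, eval w (F (Sum.inr j)) =
        eval (w ∘ uv) ((e.symm (w ∘ zv) j : MvPolynomial (Fin d) ℝ)) := by
      intro w j
      have h1 : e.symm (w ∘ zv) = ∑ i, (w (zv i)) • e.symm (Pi.single i 1) := by
        conv_lhs => rw [pi_eq_sum_univ' (w ∘ zv)]
        rw [map_sum]
        refine Finset.sum_congr rfl fun i _ => ?_
        rw [map_smul]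
        congr 2
      rw [h1, Finset.sum_apply]
      simp [hF, eval_rename]
    refine ⟨Fin b ⊕ Fin k, inferInstance, ⟨Sum.inr ⟨0, by omega⟩⟩, F, ?_, ?_, ?_⟩
    · rw [Fintype.card_sum, Fintype.card_fin, Fintype.card_fin]; omega
    · rintro (i | j)
      · refine (totalDegree_rename_le _ _).trans ((hP i).trans ?_)
        omega
      · refine td_sum fun i _ => td_mul (A := 1) (B := 2 ^ k) (by simp) ?_ (by omega)
        refine (totalDegree_rename_le _ _).trans ((hV j _ (e.symm (Pi.single i 1) j).2).trans ?_)
        refine ((hDj j).2 ⟨by positivity, le_choose (2 ^ (j : ℕ)) d hd⟩).trans ?_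
        exact Nat.pow_le_pow_right (by norm_num) j.2.le
    · rintro x x' hxx ⟨hx1, hx2⟩
      have hz : ∀ i, (eval x (F i) < 0 ↔ eval x' (F i) < 0) ∧
          (eval x (F i) = 0 ↔ eval x' (F i) = 0) ∧ (0 < eval x (F i) ↔ 0 < eval x' (F i)) := by
        intro i
        refine ⟨?_, ?_, ?_⟩
        · rw [← sign_eq_neg_one_iff, hxx, sign_eq_neg_one_iff]
        · rw [← sign_eq_zero_iff, hxx, sign_eq_zero_iff]
        · rw [← sign_eq_one_iff, hxx, sign_eq_one_iff]
      constructor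
      · have : (fun i => if τ i = true then eval (x' ∘ uv) (P i) < 0
            else eval (x' ∘ uv) (P i) = 0) = (fun i => if τ i = true then eval (x ∘ uv) (P i) < 0
            else eval (x ∘ uv) (P i) = 0) := by
          funext i
          have := hz (Sum.inl i)
          simp only [hF, Sum.elim_inl, eval_rename] at this
          split_ifs
          · exact propext this.1.symm
          · exact propext this.2.1.symm
        rw [Set.mem_ofPred_eq] at hx1 ⊢
        rw [this]
        exact hx1
      · intro j
        have h1 := hx2 j
        have h2 := hz (Sum.inr j)
        rw [hev, hev] at h2
        split_ifs with h
        · rw [if_pos h] at h1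
          exact h2.2.2.mp h1
        · rw [if_neg h] at h1
          exact h2.1.mp h1
  · ext z
    simp only [Set.mem_ofPred_eq, gu, gz]
    constructor
    · rintro ⟨y, ⟨u, hu1, hu2⟩, rfl⟩
      refine ⟨u, hu1, ?_⟩
      simpa using hu2
    · rintro ⟨u, hu1, hu2⟩
      exact ⟨e.symm z, ⟨u, hu1, hu2⟩, by simp⟩

end ISs

/-- **Complexity of the sets `I_{S,σ}`.** Fix `b, d ≥ 1`, `k ≥ 1`, `D = 2^{k/d} ≥ 2^b`, and
subspaces `𝕍_1,…,𝕍_k` as in the definition of `𝕐_k = 𝕍_1 × ⋯ × 𝕍_k`. There is a constant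
`C = C(b,d)` such that for every semi-algebraic `S ⊆ ℝ^d` of complexity at most `b` and every
strict sign condition `σ ∈ {−1,1}^k` (encoded by `Bool`, `true ↦ +1`), the set
`I_{S,σ} = {y ∈ 𝕐_k : S ∩ {σ_1 P_1 > 0,…,σ_k P_k > 0} ≠ ∅}` is semi-algebraic (in any linear
coordinate system on `𝕐_k`), defined by at most `e^{D^C}` polynomials, each of degree at most
`D^{C·d}`. -/
theorem ISsigma_semialgebraic_low_complexity (b d : ℕ) (hb : 1 ≤ b) (hd : 1 ≤ d) :
    ∃ C : ℝ, 0 < C ∧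
      ∀ (k : ℕ), 1 ≤ k →
      ∀ D : ℝ, D = 2 ^ ((k : ℝ) / (d : ℝ)) → (2 : ℝ) ^ b ≤ D →
      -- `Dj j` is the least positive integer with `binom(Dj j + d, d) > 2^{j-1}`
      ∀ Dj : Fin k → ℕ,
        (∀ j : Fin k,
          IsLeast {m : ℕ | 0 < m ∧ 2 ^ (j : ℕ) < Nat.choose (m + d) d} (Dj j)) →
      -- the `2^{j-1}`-dimensional subspaces `𝕍_j` of polynomials of degree at most `Dj j`
      ∀ V : Fin k → Submodule ℝ (MvPolynomial (Fin d) ℝ),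
        (∀ j, Module.finrank ℝ (V j) = 2 ^ (j : ℕ)) →
        (∀ j, ∀ p ∈ V j, p.totalDegree ≤ Dj j) →
      ∀ S : Set (Fin d → ℝ), IsSemiAlgebraicOfComplexity d b S →
      ∀ σ : Fin k → Bool,
      ∀ (M : ℕ) (e : ((j : Fin k) → V j) ≃ₗ[ℝ] (Fin M → ℝ)),
        ∃ L : ℕ, (L : ℝ) ≤ Real.exp (D ^ C) ∧
          DefinedByPolys
            ((⇑e) '' {y : (j : Fin k) → V j |
              (S ∩ {u : Fin d → ℝ | ∀ j : Fin k,
                if σ j then 0 < eval u ((y j : MvPolynomial (Fin d) ℝ))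
                else eval u ((y j : MvPolynomial (Fin d) ℝ)) < 0}).Nonempty})
            L (D ^ (C * d)) := by
  obtain ⟨c, hc⟩ := ISs.Det.iter d
  have hd0 : (0 : ℝ) < d := by exact_mod_cast hd
  refine ⟨d * ((2 * (c + 1) : ℕ) : ℝ), by positivity, ?_⟩
  intro k hk D hD hbD Dj hDj V hVr hV S hS σ M e
  have hbk : b ≤ k := by
    rw [hD, ← Real.rpow_natCast, Real.rpow_le_rpow_left_iff (by norm_num)] at hbD
    have h1 : (k : ℝ) / d ≤ k := div_le_self (by positivity) (by exact_mod_cast hd)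
    exact_mod_cast hbD.trans h1
  have hDC : D ^ ((d : ℝ) * ((2 * (c + 1) : ℕ) : ℝ)) = (2 : ℝ) ^ (k * (2 * (c + 1))) := by
    rw [hD, ← Real.rpow_mul (by norm_num), ← Real.rpow_natCast]
    congr 1
    push_cast
    field_simp
  have hD1 : 1 ≤ D := le_trans (one_le_pow₀ (by norm_num)) hbD
  obtain ⟨T, hT, hTe⟩ := ISs.init_det b d k M hd hk hbk Dj hDj V hV S hS σ e
  have h2 : 2 ≤ 2 ^ (k + 1) := by
    calc 2 = 2 ^ 1 := by norm_num
      _ ≤ 2 ^ (k + 1) := Nat.pow_le_pow_right (by norm_num) (by omega)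
  have hdet := hc M _ _ T h2 h2 hT
  have hdeg : (((2 ^ (k + 1)) ^ c : ℕ) : ℝ) ≤ D ^ ((d : ℝ) * ((2 * (c + 1) : ℕ) : ℝ) * d) := by
    calc (((2 ^ (k + 1)) ^ c : ℕ) : ℝ) ≤ (2 : ℝ) ^ (k * (2 * (c + 1))) := by
          have : (2 ^ (k + 1)) ^ c ≤ 2 ^ (k * (2 * (c + 1))) := by
            rw [← pow_mul]
            apply Nat.pow_le_pow_right (by norm_num)
            nlinarith
          exact_mod_cast this
      _ = D ^ ((d : ℝ) * ((2 * (c + 1) : ℕ) : ℝ)) := hDC.symm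
      _ ≤ _ := by
        apply Real.rpow_le_rpow_of_exponent_le hD1
        exact le_mul_of_one_le_right (by positivity) (by exact_mod_cast hd)
  obtain ⟨L, hL, hdef⟩ := hdet.defined _ hdeg
  refine ⟨L, ?_, ?_⟩
  · rw [hDC]
    exact ISs.num_bound c k hk L hL
  · rw [hTe]
    exact hdef
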